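/- Let f be an orientation-preserving homeomorphism of ℝ² satisfying (P1) and (P2), with Fix(f) not compact, and let I be an adapted isotopy. Let (z'_n) be a sequence of points of Fix(f) with ‖z'_n‖ ≥ R for all n ≥ n₀. Then for every finite Borel measure ν on ℝ² invariant under f and every free disc U for f, one has ∫_{∪_{k≥0} f^k(U)} sup_{n ≥ n₀} |ρ_{z'_n}(z)| dν(z) ≤ ∫_U α̂_{U,R}(z) dν(z), where α̂_{U,R}(z) := sup { |α_{U,z'}(z)| : z' ∈ Fix(f), ‖z'‖ ≥ R }. -/

import Mathlib

open MeasureTheory Filter Topology Set Metric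

noncomputable section

attribute [local instance] Classical.propDecidable

/-- An isotopy (within homeomorphisms of `X`) from the identity to `f`,
parametrised by `t ∈ [0,1]` (the values for `t ∉ [0,1]` are irrelevant). -/
structure HIsotopy {X : Type*} [TopologicalSpace X] (f : X ≃ₜ X) where
  F : ℝ → X ≃ₜ X
  cont : Continuous fun p : ℝ × X => F p.1 p.2
  cont_symm : Continuous fun p : ℝ × X => (F p.1).symm p.2
  zero : F 0 = Homeomorph.refl X
  one : F 1 = f

/-- The set of fixed points of a map. -/
def FixPts {X : Type*} (g : X → X) : Set X := {z | g z = z}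

/-- The set of positively recurrent points of `f`. -/
def RecPlus (f : ℂ ≃ₜ ℂ) : Set ℂ :=
  {z | ∃ n : ℕ → ℕ, StrictMono n ∧ Tendsto (fun k => (⇑f)^[n k] z) atTop (𝓝 z)}

/-- The total angular variation (number of turns around the origin, i.e. the
integral of the polar-angle form `dθ`) of a continuous path `[0,1] → ℂ ∖ {0}`,
defined via a continuous lift of the argument (junk value otherwise). -/
def angVar (γ : ℝ → ℂ) : ℝ :=
  if h : ∃ θ : ℝ → ℝ, ContinuousOn θ (Set.Icc 0 1) ∧
      ∀ t ∈ Set.Icc (0 : ℝ) 1, γ t = (‖γ t‖ : ℂ) * Complex.exp ((θ t : ℂ) * Complex.I)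
  then (h.choose 1 - h.choose 0) / (2 * Real.pi)
  else 0

/-- `Enlace_I(z,z')`: the integral of `dθ` along `t ↦ f_t(z) - f_t(z')`. -/
def Enlace {f : ℂ ≃ₜ ℂ} (I : HIsotopy f) (z z' : ℂ) : ℝ :=
  angVar fun t => I.F t z - I.F t z'

/-- `Tourne_I(z)`: the integral of `dθ` along `t ↦ f_t(z)`. -/
def Tourne {f : ℂ ≃ₜ ℂ} (I : HIsotopy f) (z : ℂ) : ℝ :=
  angVar fun t => I.F t z

/-- Property (P1): `Enlace_I` is bounded on pairs of distinct fixed points. -/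
def P1 {f : ℂ ≃ₜ ℂ} (I : HIsotopy f) : Prop :=
  ∃ M : ℝ, ∀ z ∈ FixPts ⇑f, ∀ z' ∈ FixPts ⇑f, z ≠ z' → |Enlace I z z'| ≤ M

/-- Property (P2): `Tourne_I` is constant on the fixed points in a
neighbourhood of infinity (i.e. outside some compact set). -/
def P2 {f : ℂ ≃ₜ ℂ} (I : HIsotopy f) : Prop :=
  ∃ K : Set ℂ, IsCompact K ∧
    ∀ z ∈ FixPts ⇑f \ K, ∀ z' ∈ FixPts ⇑f \ K, Tourne I z = Tourne I z'

/-- An isotopy is adapted if `Tourne_I` vanishes on the fixed points in a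
neighbourhood of infinity. -/
def Adapted {f : ℂ ≃ₜ ℂ} (I : HIsotopy f) : Prop :=
  ∃ K : Set ℂ, IsCompact K ∧ ∀ z ∈ FixPts ⇑f \ K, Tourne I z = 0

/-- The orbit of `z` has rotation number `ρ` around `z'` (with respect to the
isotopy `I`): along every strictly increasing sequence of integers `(n k)` with
`f^[n k] z → z`, the Birkhoff averages of `Enlace I · z'` converge to `ρ`. -/
def HasRot {f : ℂ ≃ₜ ℂ} (I : HIsotopy f) (z' z : ℂ) (ρ : ℝ) : Prop :=
  ∀ n : ℕ → ℕ, StrictMono n → Tendsto (fun k => (⇑f)^[n k] z) atTop (𝓝 z) →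
    Tendsto (fun k => (∑ r ∈ Finset.range (n k), Enlace I ((⇑f)^[r] z) z') / (n k : ℝ))
      atTop (𝓝 ρ)

/-- The rotation number `ρ_{z'}(z)` as a function (junk value `0` if it is
not defined). -/
def rho {f : ℂ ≃ₜ ℂ} (I : HIsotopy f) (z' z : ℂ) : ℝ :=
  if h : ∃ ρ : ℝ, HasRot I z' z ρ then h.choose else 0

/-- A free disc for `f`: an open set homeomorphic to the plane and disjoint
from its image. -/
def FreeDisc (f : ℂ ≃ₜ ℂ) (U : Set ℂ) : Prop :=
  IsOpen U ∧ Nonempty (U ≃ₜ ℂ) ∧ Disjoint (⇑f '' U) U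

/-- The first return time `τ_U(z)` to `U` (junk value `0` if the orbit never
returns). -/
def retTime (f : ℂ ≃ₜ ℂ) (U : Set ℂ) (z : ℂ) : ℕ :=
  sInf {n : ℕ | 0 < n ∧ (⇑f)^[n] z ∈ U}

/-- `γ` is a path in `U` from `x` to `y` (parametrised by `[0,1]`). -/
def IsPathIn (U : Set ℂ) (x y : ℂ) (γ : ℝ → ℂ) : Prop :=
  ContinuousOn γ (Set.Icc 0 1) ∧ (∀ t ∈ Set.Icc (0 : ℝ) 1, γ t ∈ U) ∧ γ 0 = x ∧ γ 1 = y

/-- `α_{U,z'}(z) = Σ_{0 ≤ ℓ < τ_U(z)} Enlace_I(f^ℓ(z),z') + ∫_{γ_{U,z} - z'} dθ`,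
where `γ_{U,z}` is a path in `U` joining the first return `F_U(z)` to `z`. -/
def alphaU {f : ℂ ≃ₜ ℂ} (I : HIsotopy f) (U : Set ℂ) (z' z : ℂ) : ℝ :=
  (∑ ℓ ∈ Finset.range (retTime f U z), Enlace I ((⇑f)^[ℓ] z) z') +
    if h : ∃ γ : ℝ → ℂ, IsPathIn U ((⇑f)^[retTime f U z] z) z γ
    then angVar fun t => h.choose t - z' else 0

/-- `α̂_{U,R}(z) = sup { |α_{U,z'}(z)| : z' ∈ Fix(f), ‖z'‖ ≥ R }`. -/
def alphaHat {f : ℂ ≃ₜ ℂ} (I : HIsotopy f) (U : Set ℂ) (R : ℝ) (z : ℂ) : ℝ :=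
  sSup {a : ℝ | ∃ z' ∈ FixPts ⇑f, R ≤ ‖z'‖ ∧ a = |alphaU I U z' z|}

/-- The (closed) support of a measure. -/
def measSupport {X : Type*} [TopologicalSpace X] {m : MeasurableSpace X}
    (μ : Measure X) : Set X :=
  {x | ∀ U : Set X, IsOpen U → x ∈ U → μ U ≠ 0}

/-- The standard unit sphere `S² ⊂ ℝ³`. -/
notation "𝕊²" => Metric.sphere (0 : EuclideanSpace ℝ (Fin 3)) 1

instance : Fact (Module.finrank ℝ (EuclideanSpace ℝ (Fin 3)) = 3) :=
  ⟨finrank_euclideanSpace_fin⟩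

open Manifold in
/-- `g` is a `C¹` diffeomorphism of the standard sphere. -/
def IsC1SphereDiffeo (g : 𝕊² → 𝕊²) : Prop :=
  Function.Bijective g ∧ ContMDiff (𝓡 2) (𝓡 2) 1 g ∧
    ∃ g' : 𝕊² → 𝕊², Function.LeftInverse g' g ∧ Function.RightInverse g' g ∧
      ContMDiff (𝓡 2) (𝓡 2) 1 g'

/-- `f` extends to a `C¹` diffeomorphism of `S² = ℝ² ⊔ {∞}` for some smooth
structure on `S²`: transporting the extension of `f` to the one-point
compactification through some homeomorphism with the standard sphere yields a
`C¹` diffeomorphism. -/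
def ExtendsToC1SphereDiffeo (f : ℂ ≃ₜ ℂ) : Prop :=
  ∃ φ : OnePoint ℂ ≃ₜ 𝕊², IsC1SphereDiffeo fun x => φ (OnePoint.map (⇑f) (φ.symm x))

/-- The commutator loop `t ↦ [f₁^t, f₂^t] = f₁^t ∘ f₂^t ∘ (f₁^t)⁻¹ ∘ (f₂^t)⁻¹`. -/
def commLoop {X : Type*} [TopologicalSpace X] {f₁ f₂ : X ≃ₜ X}
    (I₁ : HIsotopy f₁) (I₂ : HIsotopy f₂) (t : ℝ) : X ≃ₜ X :=
  (I₂.F t).symm.trans ((I₁.F t).symm.trans ((I₂.F t).trans (I₁.F t)))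

/-- The invariant `W(f₁,f₂)` vanishes: for isotopies from the identity to
`f₁`, `f₂`, the commutator loop is null-homotopic (rel basepoint) in the group
of homeomorphisms. -/
def WVanishes {X : Type*} [TopologicalSpace X] (f₁ f₂ : X ≃ₜ X) : Prop :=
  ∃ (I₁ : HIsotopy f₁) (I₂ : HIsotopy f₂) (H : ℝ → ℝ → X ≃ₜ X),
    Continuous (fun p : (ℝ × ℝ) × X => H p.1.1 p.1.2 p.2) ∧
    Continuous (fun p : (ℝ × ℝ) × X => (H p.1.1 p.1.2).symm p.2) ∧
    (∀ t, H 0 t = commLoop I₁ I₂ t) ∧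
    (∀ t, H 1 t = Homeomorph.refl X) ∧
    (∀ s, H s 0 = Homeomorph.refl X) ∧
    (∀ s, H s 1 = Homeomorph.refl X)

/-- The shorter great-circle arc joining `p` to `z` on the unit sphere
(for `z` neither `p` nor its antipode): the points of the sphere which are
nonnegative linear combinations of `p` and `z`. -/
def minorArcS (p z : 𝕊²) : Set 𝕊² :=
  {x | ∃ a b : ℝ, 0 ≤ a ∧ 0 ≤ b ∧
    (x : EuclideanSpace ℝ (Fin 3)) =
      a • (p : EuclideanSpace ℝ (Fin 3)) + b • (z : EuclideanSpace ℝ (Fin 3))}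

/-- The longer great-circle arc joining `p` to `z` on the unit sphere. -/
def majorArcS (p z : 𝕊²) : Set 𝕊² :=
  {x | ∃ a b : ℝ, (a ≤ 0 ∨ b ≤ 0) ∧
    (x : EuclideanSpace ℝ (Fin 3)) =
      a • (p : EuclideanSpace ℝ (Fin 3)) + b • (z : EuclideanSpace ℝ (Fin 3))}

/-!
Fix a free disc `U` and lift `f` to the universal cover of the complement of a fixed point `z'`,
using logarithmic coordinates. By (P1), the lift composed with `p` backward turns has no fixed
point as soon as `|p|` exceeds a bound independent of `z'`, so Franks' lemma forbids it from having
closed chains of lifts of `U`. Hence a return to `U` turning around `z'` faster than `p` turns per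
iterate and a return turning slower than `p` cannot coexist. Comparison with a single reference
return, whose turning is bounded uniformly in `z'`, yields `|α_{U,z'}| ≤ P · τ_U` with `P`
independent of `z'`, and `α̂_{U,R}` is integrable because `τ_U` is (Kac).

The turning numbers of successive returns add up along a recurrent orbit, so `|ρ_{z'}|` is at most
the upper limit of the Birkhoff averages of `𝟙_U · α̂_{U,R}`, whose integral is controlled by the
maximal ergodic inequality.
-/

/-! ### Continuous logarithms -/

/-- The period `2πi` of the exponential: adding it to a logarithm is one full turn. -/
def turn : ℂ := 2 * Real.pi * Complex.I

/-- The number of full turns recorded by a logarithm, i.e. its imaginary part divided by `2π`. -/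
def turns (w : ℂ) : ℝ := w.im / (2 * Real.pi)

theorem turn_ne_zero : turn ≠ 0 := Complex.two_pi_I_ne_zero

theorem exp_add_int_mul_turn (w : ℂ) (k : ℤ) : Complex.exp (w + k * turn) = Complex.exp w :=
  Complex.exp_periodic.int_mul k w

theorem exists_eq_add_int_mul_turn {v w : ℂ} (h : Complex.exp v = Complex.exp w) :
    ∃ k : ℤ, v = w + k * turn :=
  Complex.exp_eq_exp_iff_exists_int.mp h

theorem continuous_turns : Continuous turns :=
  Complex.continuous_im.div_const _

theorem turns_add (v w : ℂ) : turns (v + w) = turns v + turns w := by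
  simp only [turns, Complex.add_im, add_div]

theorem turns_int_mul_turn (k : ℤ) : turns (k * turn) = k := by
  simp [turns, turn]

/-- Contracting the domain to a point reduces the existence of a logarithm to homotopy lifting for
the covering `exp`. -/
theorem exists_continuous_log {A : Type*} [TopologicalSpace A] [ContractibleSpace A] {q : A → ℂ}
    (hq : Continuous q) (hq₀ : ∀ a, q a ≠ 0) :
    ∃ L : A → ℂ, Continuous L ∧ ∀ a, Complex.exp (L a) = q a := by
  obtain ⟨a₀, ⟨contraction⟩⟩ := id_nullhomotopic A
  let H : C(unitInterval × A, {z : ℂ // z ≠ 0}) :=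
    ⟨fun p => ⟨q (contraction.symm p), hq₀ _⟩, by fun_prop⟩
  let start : C(A, ℂ) := ContinuousMap.const _ (Complex.log (q a₀))
  have H_zero : ∀ a, H (0, a) = (⟨_, (start a).exp_ne_zero⟩ : {z : ℂ // z ≠ 0}) := fun a =>
    Subtype.ext (by simp [H, start, Complex.exp_log (hq₀ a₀)])
  refine ⟨fun a => Complex.isCoveringMap_exp.liftHomotopy H start H_zero (1, a),
    by fun_prop, fun a => ?_⟩
  have lifts := congrFun (Complex.isCoveringMap_exp.liftHomotopy_lifts H start H_zero) (1, a)
  simpa [H] using congrArg Subtype.val lifts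

theorem exists_continuousOn_log {A : Type*} [TopologicalSpace A] {X : Set A} [ContractibleSpace X]
    {q : A → ℂ} (hq : ContinuousOn q X) (hq₀ : ∀ a ∈ X, q a ≠ 0) :
    ∃ L : A → ℂ, ContinuousOn L X ∧ ∀ a ∈ X, Complex.exp (L a) = q a := by
  obtain ⟨L, L_cont, exp_L⟩ := exists_continuous_log hq.domRestrict fun a : X => hq₀ a a.2
  have extend_eq (a : X) : Function.extend Subtype.val L 0 (a : A) = L a :=
    Subtype.val_injective.extend_apply L 0 a
  refine ⟨Function.extend Subtype.val L 0, ?_, fun a ha => ?_⟩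
  · rw [continuousOn_iff_continuous_domRestrict]
    exact L_cont.congr fun a => (extend_eq a).symm
  · rw [extend_eq ⟨a, ha⟩, exp_L, domRestrict_apply]

theorem log_sub_log_eq {A : Type*} [TopologicalSpace A] {X : Set A} (hX : IsPreconnected X)
    {L M : A → ℂ} (hL : ContinuousOn L X) (hM : ContinuousOn M X)
    (h : ∀ a ∈ X, Complex.exp (L a) = Complex.exp (M a)) {a b : A} (ha : a ∈ X) (hb : b ∈ X) :
    L a - M a = L b - M b := by
  have exp_shift : ∀ c ∈ X, Complex.exp (L c) = Complex.exp (M c + (L a - M a)) := by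
    obtain ⟨k, hk⟩ := exists_eq_add_int_mul_turn (h a ha)
    intro c hc
    rw [hk, add_sub_cancel_left, exp_add_int_mul_turn, h c hc]
  have L_eq := Complex.isCoveringMap_exp.eqOn_of_comp_eqOn hX hL (hM.add continuousOn_const)
    (fun c hc => Subtype.ext (exp_shift c hc)) ha (add_sub_cancel _ _).symm hb
  rw [L_eq, Pi.add_apply, add_sub_cancel_left]

theorem angVar_eq_turns_sub {γ L : ℝ → ℂ} (hL : ContinuousOn L (Icc 0 1))
    (h : ∀ t ∈ Icc (0 : ℝ) 1, Complex.exp (L t) = γ t) :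
    angVar γ = turns (L 1) - turns (L 0) := by
  have angle_exists : ∃ θ : ℝ → ℝ, ContinuousOn θ (Icc 0 1) ∧
      ∀ t ∈ Icc (0 : ℝ) 1, γ t = (‖γ t‖ : ℂ) * Complex.exp ((θ t : ℂ) * Complex.I) := by
    refine ⟨fun t => (L t).im, Complex.continuous_im.comp_continuousOn hL, fun t ht => ?_⟩
    rw [← h t ht, Complex.norm_exp, Complex.ofReal_exp, ← Complex.exp_add, Complex.re_add_im]
  rw [angVar, dif_pos angle_exists]
  obtain ⟨θ_cont, hθ⟩ := angle_exists.choose_spec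
  set θ := angle_exists.choose
  have log_eq := log_sub_log_eq isPreconnected_Icc hL
    (M := fun t => ((L t).re : ℂ) + (θ t : ℂ) * Complex.I) (by fun_prop) (fun t ht => by
      rw [Complex.exp_add, ← Complex.ofReal_exp, ← Complex.norm_exp, h t ht]
      exact hθ t ht) (left_mem_Icc.mpr zero_le_one) (right_mem_Icc.mpr zero_le_one)
  have im_eq : (L 0).im - θ 0 = (L 1).im - θ 1 := by
    simpa using congrArg Complex.im log_eq
  rw [turns, turns, ← sub_div]
  congr 1
  linarith

/-! ### Closed orbit curves force fixed points -/

/-- An isotopy through injective maps, parametrised by `[0, 1]`, from the identity to `g`. -/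
structure IsIsotopy {X : Type*} [TopologicalSpace X] (H : ℝ → X → X) (g : X → X) : Prop where
  continuous : Continuous fun p : ℝ × X => H p.1 p.2
  injective : ∀ τ ∈ Icc (0 : ℝ) 1, Function.Injective (H τ)
  zero : H 0 = id
  one : H 1 = g

/-- The parameters of the proper chords of a loop parametrised by `[s, t]`: the ordered pairs of
times other than `(s, t)`. -/
def chords (s t : ℝ) : Set (ℝ × ℝ) := {p | s ≤ p.1 ∧ p.2 ≤ t ∧ 0 < p.2 - p.1 ∧ p.2 - p.1 < t - s}

/-- The curve `Γ` follows the orbits of `g`, one iteration per unit of time, and its restriction to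
`[s, t]` is a simple loop that takes more than one unit of time. -/
structure IsOrbitLoop (g : ℂ → ℂ) (Γ : ℝ → ℂ) (s t : ℝ) : Prop where
  continuousOn : ContinuousOn Γ (Icc s (t + 1))
  shift : ∀ a ∈ Icc s t, Γ (a + 1) = g (Γ a)
  lt : s + 1 < t
  closed : Γ s = Γ t
  simple : ∀ p ∈ chords s t, Γ p.1 ≠ Γ p.2

/-- A continuous logarithm, along an isotopy `H`, of the proper chords of the loop `Γ`. -/
structure IsChordLog (H : ℝ → ℂ → ℂ) (Γ : ℝ → ℂ) (s t : ℝ) (Λ : ℝ → ℝ → ℝ → ℂ) : Prop where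
  continuousOn : ContinuousOn (fun q : ℝ × ℝ × ℝ => Λ q.1 q.2.1 q.2.2) (Icc 0 1 ×ˢ chords s t)
  exp : ∀ τ ∈ Icc (0 : ℝ) 1, ∀ p ∈ chords s t,
    Complex.exp (Λ τ p.1 p.2) = H τ (Γ p.2) - H τ (Γ p.1)

theorem mem_chords {s t a b : ℝ} :
    (a, b) ∈ chords s t ↔ s ≤ a ∧ b ≤ t ∧ a < b ∧ b - a < t - s := by
  simp only [chords, mem_ofPred_eq, sub_pos]

theorem convex_chords (s t : ℝ) : Convex ℝ (chords s t) := by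
  have chords_eq : chords s t = LinearMap.fst ℝ ℝ ℝ ⁻¹' Ici s ∩ (LinearMap.snd ℝ ℝ ℝ ⁻¹' Iic t ∩
      (LinearMap.snd ℝ ℝ ℝ - LinearMap.fst ℝ ℝ ℝ) ⁻¹' Ioo 0 (t - s)) := rfl
  rw [chords_eq]
  exact ((convex_Ici s).linear_preimage _).inter
    (((convex_Iic t).linear_preimage _).inter ((convex_Ioo 0 (t - s)).linear_preimage _))

section OrbitLoop

variable {g : ℂ → ℂ} {H : ℝ → ℂ → ℂ} {Γ : ℝ → ℂ} {s t : ℝ} {Λ : ℝ → ℝ → ℝ → ℂ} {θ : ℝ → ℂ}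

theorem IsOrbitLoop.exists_isChordLog (hΓ : IsOrbitLoop g Γ s t) (hH : IsIsotopy H g) :
    ∃ Λ, IsChordLog H Γ s t Λ := by
  have convex_domain : Convex ℝ (Icc (0 : ℝ) 1 ×ˢ chords s t) :=
    (convex_Icc 0 1).prod (convex_chords s t)
  have mem_domain : ((0, s, s + 1) : ℝ × ℝ × ℝ) ∈ Icc (0 : ℝ) 1 ×ˢ chords s t := by
    have := hΓ.lt
    exact ⟨left_mem_Icc.mpr zero_le_one, mem_chords.mpr (by grind)⟩
  have : ContractibleSpace ↥(Icc (0 : ℝ) 1 ×ˢ chords s t) :=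
    convex_domain.contractibleSpace ⟨_, mem_domain⟩
  have endpoint_cont (u : ℝ × ℝ × ℝ → ℝ) (hu : Continuous u)
      (mem : ∀ q ∈ Icc (0 : ℝ) 1 ×ˢ chords s t, u q ∈ Icc s (t + 1)) :
      ContinuousOn (fun q : ℝ × ℝ × ℝ => H q.1 (Γ (u q))) (Icc 0 1 ×ˢ chords s t) :=
    hH.continuous.comp_continuousOn
      (continuousOn_fst.prodMk (hΓ.continuousOn.comp hu.continuousOn mem))
  obtain ⟨L, L_cont, exp_L⟩ := exists_continuousOn_log
    (X := Icc (0 : ℝ) 1 ×ˢ chords s t) (q := fun q => H q.1 (Γ q.2.2) - H q.1 (Γ q.2.1))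
    ((endpoint_cont (·.2.2) (by fun_prop) fun q hq => by
        obtain ⟨-, _, _, _, _⟩ := hq; constructor <;> linarith).sub
      (endpoint_cont (·.2.1) (by fun_prop) fun q hq => by
        obtain ⟨-, _, _, _, _⟩ := hq; constructor <;> linarith))
    fun q hq => sub_ne_zero.mpr fun h =>
      hΓ.simple q.2 hq.2 (hH.injective q.1 hq.1 h).symm
  exact ⟨fun τ a b => L (τ, a, b), L_cont, fun τ hτ p hp => exp_L (τ, p.1, p.2) ⟨hτ, hp⟩⟩

theorem IsChordLog.sub_eq_sub (hΛ : IsChordLog H Γ s t Λ) {τ : ℝ} (hτ : τ ∈ Icc (0 : ℝ) 1)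
    {x y : ℝ} (hxy : x ≤ y) {u v : ℝ → ℝ} (hu : Continuous u) (hv : Continuous v)
    (huv : ∀ a ∈ Icc x y, (u a, v a) ∈ chords s t) {M : ℝ → ℂ} (hM : ContinuousOn M (Icc x y))
    (exp_M : ∀ a ∈ Icc x y, Complex.exp (M a) = H τ (Γ (v a)) - H τ (Γ (u a))) :
    M x - Λ τ (u x) (v x) = M y - Λ τ (u y) (v y) := by
  have Λ_cont : ContinuousOn (fun a => Λ τ (u a) (v a)) (Icc x y) :=
    hΛ.continuousOn.comp (f := fun a => (τ, u a, v a)) (by fun_prop) fun a ha => ⟨hτ, huv a ha⟩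
  exact log_sub_log_eq isPreconnected_Icc hM Λ_cont
    (fun a ha => (exp_M a ha).trans (hΛ.exp τ hτ _ (huv a ha)).symm)
    (left_mem_Icc.mpr hxy) (right_mem_Icc.mpr hxy)

theorem IsChordLog.exp_zero (hΛ : IsChordLog H Γ s t Λ) (hH : IsIsotopy H g) {a b : ℝ}
    (hab : (a, b) ∈ chords s t) : Complex.exp (Λ 0 a b) = Γ b - Γ a := by
  simpa only [hH.zero, id] using hΛ.exp 0 (left_mem_Icc.mpr zero_le_one) _ hab

theorem IsOrbitLoop.isotopy_one_sub (hΓ : IsOrbitLoop g Γ s t) (hH : IsIsotopy H g) {a b : ℝ}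
    (hab : (a, b) ∈ chords s t) : H 1 (Γ b) - H 1 (Γ a) = Γ (b + 1) - Γ (a + 1) := by
  obtain ⟨ha, hb, hlt, -⟩ := mem_chords.mp hab
  rw [hH.one, hΓ.shift a ⟨ha, by linarith⟩, hΓ.shift b ⟨by linarith, hb⟩]

/-- The chord from time `a` to `t` and the chord from `s` to `a` are opposite, so their logarithms
differ by a constant along the isotopy. -/
theorem IsChordLog.flip_sub_eq (hΛ : IsChordLog H Γ s t Λ) (hΓ : IsOrbitLoop g Γ s t) :
    Λ 0 (s + 1) t - Λ 0 s (s + 1) = Λ 1 (t - 1) t - Λ 1 s (t - 1) := by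
  have hlt := hΓ.lt
  have mem_left : ∀ a ∈ Ioo s t, (s, a) ∈ chords s t := fun a ⟨_, _⟩ => mem_chords.mpr (by grind)
  have mem_right : ∀ a ∈ Ioo s t, (a, t) ∈ chords s t := fun a ⟨_, _⟩ => mem_chords.mpr (by grind)
  have flip := log_sub_log_eq (X := Icc (0 : ℝ) 1 ×ˢ Ioo s t)
    (isPreconnected_Icc.prod isPreconnected_Ioo)
    (L := fun q => Λ q.1 q.2 t) (M := fun q => Λ q.1 s q.2 + Real.pi * Complex.I)
    (hΛ.continuousOn.comp (f := fun q : ℝ × ℝ => (q.1, q.2, t)) (by fun_prop)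
      fun q hq => ⟨hq.1, mem_right _ hq.2⟩)
    ((hΛ.continuousOn.comp (f := fun q : ℝ × ℝ => (q.1, s, q.2)) (by fun_prop)
      fun q hq => ⟨hq.1, mem_left _ hq.2⟩).add continuousOn_const)
    (fun q hq => by
      rw [Complex.exp_add, Complex.exp_pi_mul_I, hΛ.exp _ hq.1 _ (mem_right _ hq.2),
        hΛ.exp _ hq.1 _ (mem_left _ hq.2), hΓ.closed]
      ring)
    (a := (0, s + 1)) (b := (1, t - 1))
    ⟨left_mem_Icc.mpr zero_le_one, by constructor <;> simp only <;> linarith⟩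
    ⟨right_mem_Icc.mpr zero_le_one, by constructor <;> simp only <;> linarith⟩
  linear_combination flip

theorem IsChordLog.flip_sub_ne_zero (hΛ : IsChordLog H Γ s t Λ) (hΓ : IsOrbitLoop g Γ s t)
    (hH : IsIsotopy H g) : Λ 0 (s + 1) t - Λ 0 s (s + 1) ≠ 0 := by
  have hlt := hΓ.lt
  have mem_right : (s + 1, t) ∈ chords s t := mem_chords.mpr (by grind)
  have mem_left : (s, s + 1) ∈ chords s t := mem_chords.mpr (by grind)
  intro h
  have exp_eq := congrArg Complex.exp (sub_eq_zero.mp h)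
  rw [hΛ.exp_zero hH mem_right, hΛ.exp_zero hH mem_left, hΓ.closed] at exp_eq
  exact hΓ.simple _ mem_right (by linear_combination -(1 / 2) * exp_eq)

theorem IsChordLog.sub_unit_chord_eq (hΛ : IsChordLog H Γ s t Λ) (hΓ : IsOrbitLoop g Γ s t)
    (hH : IsIsotopy H g) (hθ : ContinuousOn θ (Icc s t))
    (exp_θ : ∀ a ∈ Icc s t, Complex.exp (θ a) = Γ (a + 1) - Γ a) :
    θ s - Λ 0 s (s + 1) = θ (t - 1) - Λ 0 (t - 1) t := by
  have hlt := hΓ.lt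
  have h := hΛ.sub_eq_sub (τ := 0) (left_mem_Icc.mpr zero_le_one) (x := s) (y := t - 1)
    (by linarith) continuous_id (continuous_id.add continuous_const) (v := fun a => a + 1)
    (fun a ⟨_, _⟩ => mem_chords.mpr (by grind))
    (hθ.mono (Icc_subset_Icc_right (by linarith)))
    (fun a ha => by rw [exp_θ a ⟨ha.1, by linarith [ha.2]⟩, hH.zero, id, id, id])
  simpa only [id, sub_add_cancel] using h

/-- As `a` runs from `x` to `t`, the displacement at time `a` is the image of the chord from
`a - 1` to `a`. -/
theorem IsChordLog.sub_unit_chord_one_eq (hΛ : IsChordLog H Γ s t Λ) (hΓ : IsOrbitLoop g Γ s t)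
    (hH : IsIsotopy H g) (hθ : ContinuousOn θ (Icc s t))
    (exp_θ : ∀ a ∈ Icc s t, Complex.exp (θ a) = Γ (a + 1) - Γ a) {x : ℝ} (hx : x ∈ Icc (s + 1) t) :
    θ x - Λ 1 (x - 1) x = θ t - Λ 1 (t - 1) t := by
  have hlt := hΓ.lt
  obtain ⟨hsx, hxt⟩ := hx
  have chord_mem : ∀ a ∈ Icc x t, (a - 1, a) ∈ chords s t :=
    fun a ⟨_, _⟩ => mem_chords.mpr (by grind)
  exact hΛ.sub_eq_sub (τ := 1) (right_mem_Icc.mpr zero_le_one) hxt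
    (u := fun a => a - 1) (v := fun a => a) (by fun_prop) (by fun_prop) chord_mem
    (hθ.mono (Icc_subset_Icc_left (by linarith)))
    (fun a ha => by
      rw [hΓ.isotopy_one_sub hH (chord_mem a ha), sub_add_cancel,
        exp_θ a ⟨by linarith [ha.1], ha.2⟩])

theorem IsChordLog.sub_eq_of_two_le (hΛ : IsChordLog H Γ s t Λ) (hΓ : IsOrbitLoop g Γ s t)
    (hH : IsIsotopy H g) (hθ : ContinuousOn θ (Icc s t))
    (exp_θ : ∀ a ∈ Icc s t, Complex.exp (θ a) = Γ (a + 1) - Γ a) (h_two : 2 ≤ t - s) :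
    θ (t - 1) - Λ 0 (t - 1) t =
      θ t - Λ 1 (t - 1) t + Λ 1 s (t - 1) - Λ 0 (s + 1) t := by
  have displacement := hΛ.sub_unit_chord_one_eq hΓ hH hθ exp_θ (x := t - 1)
    ⟨by linarith, by linarith⟩
  have chord_mem : ∀ a ∈ Icc (s + 1) (t - 1), (a, t) ∈ chords s t :=
    fun a ⟨_, _⟩ => mem_chords.mpr (by grind)
  have shifted_mem : ∀ a ∈ Icc (s + 1) (t - 1), (a - 1, t - 1) ∈ chords s t :=
    fun a ⟨_, _⟩ => mem_chords.mpr (by grind)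
  have chord := hΛ.sub_eq_sub (τ := 1) (right_mem_Icc.mpr zero_le_one) (by linarith)
    (u := fun a => a - 1) (v := fun _ => t - 1) (by fun_prop) (by fun_prop) shifted_mem
    (M := fun a => Λ 0 a t)
    (hΛ.continuousOn.comp (f := fun a => ((0 : ℝ), a, t)) (by fun_prop)
      fun a ha => ⟨left_mem_Icc.mpr zero_le_one, chord_mem a ha⟩)
    (fun a ha => by
      rw [hΓ.isotopy_one_sub hH (shifted_mem a ha), sub_add_cancel, sub_add_cancel,
        hΛ.exp_zero hH (chord_mem a ha)])
  simp only [add_sub_cancel_right] at chord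
  linear_combination displacement + chord

/-- The logarithm `N` of the chords joining the two overlapping arcs replaces, for short loops,
the chords from times `a` to `t` with `a` in `[s + 1, t - 1]`. -/
theorem IsChordLog.sub_eq_of_arcs_disjoint (hΛ : IsChordLog H Γ s t Λ)
    (hΓ : IsOrbitLoop g Γ s t) (hH : IsIsotopy H g) (hθ : ContinuousOn θ (Icc s t))
    (exp_θ : ∀ a ∈ Icc s t, Complex.exp (θ a) = Γ (a + 1) - Γ a) (h_two : t - s < 2)
    {N : ℝ × ℝ → ℂ} (hN : ContinuousOn N (Icc (t - 1) (s + 1) ×ˢ Icc t (s + 2)))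
    (exp_N : ∀ a ∈ Icc (t - 1) (s + 1), ∀ b ∈ Icc t (s + 2),
      Complex.exp (N (a, b)) = Γ b - Γ a) :
    θ (t - 1) - Λ 0 (t - 1) t =
      θ t - Λ 1 (t - 1) t + Λ 1 s (t - 1) - Λ 0 (s + 1) t := by
  have hlt := hΓ.lt
  have displacement := hΛ.sub_unit_chord_one_eq hΓ hH hθ exp_θ (x := s + 1)
    ⟨by linarith, by linarith⟩
  have unit_chord := log_sub_log_eq (X := Icc (t - 1) (s + 1)) isPreconnected_Icc
    (hθ.mono (Icc_subset_Icc (by linarith) (by linarith))) (M := fun a => N (a, a + 1))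
    (hN.comp (by fun_prop) fun a ha => ⟨ha, by
      constructor <;> simp only <;> linarith [ha.1, ha.2]⟩)
    (fun a ha => by
      rw [exp_θ a ⟨by linarith [ha.1], by linarith [ha.2]⟩,
        exp_N a ha (a + 1) ⟨by linarith [ha.1], by linarith [ha.2]⟩])
    (a := t - 1) (b := s + 1) ⟨le_rfl, by linarith⟩ ⟨by linarith, le_rfl⟩
  have chord_mem : ∀ b ∈ Icc t (s + 2), (s, b - 1) ∈ chords s t :=
    fun b ⟨_, _⟩ => mem_chords.mpr (by grind)
  have chord_one := hΛ.sub_eq_sub (τ := 1) (right_mem_Icc.mpr zero_le_one) (by linarith)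
    (u := fun _ => s) (v := fun b => b - 1) (by fun_prop) (by fun_prop) chord_mem
    (M := fun b => N (s + 1, b))
    (hN.comp (by fun_prop) fun b hb => ⟨⟨by simp only; linarith, le_rfl⟩, hb⟩)
    (fun b hb => by
      rw [hΓ.isotopy_one_sub hH (chord_mem b hb), sub_add_cancel,
        exp_N _ ⟨by linarith, le_rfl⟩ b hb])
  have chord_zero := hΛ.sub_eq_sub (τ := 0) (left_mem_Icc.mpr zero_le_one) (x := t - 1)
    (y := s + 1) (by linarith) (u := fun a => a) (v := fun _ => t) (by fun_prop) (by fun_prop)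
    (fun a ⟨_, _⟩ => mem_chords.mpr (by grind))
    (M := fun a => N (a, t))
    (hN.comp (by fun_prop) fun a ha => ⟨ha, le_rfl, by simp only; linarith⟩)
    (fun a ha => by rw [exp_N a ha t ⟨le_rfl, by linarith⟩, hH.zero, id, id])
  have h₁ : s + 1 + 1 = s + 2 := by ring
  have h₂ : s + 2 - 1 = s + 1 := by ring
  simp only [h₁, h₂, sub_add_cancel, add_sub_cancel_right] at displacement unit_chord chord_one
  linear_combination displacement + unit_chord + chord_one + chord_zero

theorem IsOrbitLoop.false_of_isotopy (hΓ : IsOrbitLoop g Γ s t) (hH : IsIsotopy H g)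
    (hg : ∀ z, g z ≠ z)
    (h : 2 ≤ t - s ∨ ∀ a ∈ Icc (t - 1) (s + 1), ∀ b ∈ Icc t (s + 2), Γ a ≠ Γ b) : False := by
  have hlt := hΓ.lt
  obtain ⟨Λ, hΛ⟩ := hΓ.exists_isChordLog hH
  have g_cont : Continuous g := hH.one ▸ hH.continuous.comp (Continuous.prodMk_right 1)
  obtain ⟨Θ, Θ_cont, exp_Θ⟩ := exists_continuous_log (g_cont.sub continuous_id)
    fun z => sub_ne_zero.mpr (hg z)
  have hθ : ContinuousOn (Θ ∘ Γ) (Icc s t) :=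
    Θ_cont.comp_continuousOn (hΓ.continuousOn.mono (Icc_subset_Icc_right (by linarith)))
  have exp_θ : ∀ a ∈ Icc s t, Complex.exp ((Θ ∘ Γ) a) = Γ (a + 1) - Γ a := fun a ha => by
    rw [Function.comp_apply, exp_Θ, hΓ.shift a ha, Pi.sub_apply, id]
  have final_eq : (Θ ∘ Γ) (t - 1) - Λ 0 (t - 1) t =
      (Θ ∘ Γ) t - Λ 1 (t - 1) t + Λ 1 s (t - 1) - Λ 0 (s + 1) t := by
    rcases le_or_gt 2 (t - s) with h_two | h_two
    · exact hΛ.sub_eq_of_two_le hΓ hH hθ exp_θ h_two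
    · have arcs_ne := h.resolve_left h_two.not_ge
      have : ContractibleSpace ↥(Icc (t - 1) (s + 1) ×ˢ Icc t (s + 2)) :=
        ((convex_Icc _ _).prod (convex_Icc _ _)).contractibleSpace
          ⟨(t - 1, t), ⟨le_rfl, by simp only; linarith⟩, ⟨le_rfl, by simp only; linarith⟩⟩
      obtain ⟨N, hN, exp_N⟩ := exists_continuousOn_log
        (X := Icc (t - 1) (s + 1) ×ˢ Icc t (s + 2)) (q := fun p => Γ p.2 - Γ p.1)
        ((hΓ.continuousOn.comp continuousOn_snd fun p hp => by
            obtain ⟨⟨_, _⟩, _, _⟩ := hp; constructor <;> linarith).sub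
          (hΓ.continuousOn.comp continuousOn_fst fun p hp => by
            obtain ⟨⟨_, _⟩, _, _⟩ := hp; constructor <;> linarith))
        fun p hp => sub_ne_zero.mpr (arcs_ne _ hp.1 _ hp.2).symm
      exact hΛ.sub_eq_of_arcs_disjoint hΓ hH hθ exp_θ h_two hN fun a ha b hb =>
        exp_N (a, b) ⟨ha, hb⟩
  have θ_closed : (Θ ∘ Γ) s = (Θ ∘ Γ) t := congrArg Θ hΓ.closed
  refine hΛ.flip_sub_ne_zero hΓ hH ?_
  linear_combination (1 / 2 : ℂ) * (hΛ.flip_sub_eq hΓ +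
    hΛ.sub_unit_chord_eq hΓ hH hθ exp_θ + final_eq - θ_closed)

end OrbitLoop

/-! ### Brouwer's lemma on translation arcs -/

/-- Open maps of a space isotopic to the identity through injective maps. -/
structure IsotopicToId {X : Type*} [TopologicalSpace X] (g : X → X) : Prop where
  isOpenMap : IsOpenMap g
  exists_isIsotopy : ∃ H, IsIsotopy H g

theorem IsotopicToId.continuous {X : Type*} [TopologicalSpace X] {g : X → X}
    (hg : IsotopicToId g) : Continuous g := by
  obtain ⟨H, hH⟩ := hg.exists_isIsotopy
  exact hH.one ▸ hH.continuous.comp (Continuous.prodMk_right 1)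

theorem IsotopicToId.injective {X : Type*} [TopologicalSpace X] {g : X → X}
    (hg : IsotopicToId g) : Function.Injective g := by
  obtain ⟨H, hH⟩ := hg.exists_isIsotopy
  exact hH.one ▸ hH.injective 1 (right_mem_Icc.mpr zero_le_one)

/-- An arc joining a point to its image under `g` and disjoint, apart from its endpoints, from its
image. -/
structure IsTranslationArc {X : Type*} [TopologicalSpace X] (g : X → X) (γ : ℝ → X) : Prop where
  continuousOn : ContinuousOn γ (Icc 0 1)
  one_eq : γ 1 = g (γ 0)
  injOn : InjOn γ (Icc 0 1)
  ends_of_eq : ∀ a ∈ Icc (0 : ℝ) 1, ∀ b ∈ Icc (0 : ℝ) 1, γ a = g (γ b) →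
    a = 1 ∧ b = 0 ∨ a = 0 ∧ b = 1

/-- The concatenation of `γ` with its successive images under `g`. -/
def orbitCurve {X : Type*} (g : X → X) (γ : ℝ → X) (a : ℝ) : X := g^[⌊a⌋₊] (γ (Int.fract a))

section OrbitCurve

variable {X : Type*} {g : X → X} {γ : ℝ → X}

theorem orbitCurve_add_natCast (g : X → X) (γ : ℝ → X) (k : ℕ) {a : ℝ} (ha : 0 ≤ a) :
    orbitCurve g γ (a + k) = g^[k] (orbitCurve g γ a) := by
  rw [orbitCurve, Nat.floor_add_natCast ha, Int.fract_add_natCast, add_comm,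
    Function.iterate_add_apply, orbitCurve]

theorem orbitCurve_add_one (g : X → X) (γ : ℝ → X) {a : ℝ} (ha : 0 ≤ a) :
    orbitCurve g γ (a + 1) = g (orbitCurve g γ a) := by
  simpa using orbitCurve_add_natCast g γ 1 ha

theorem orbitCurve_of_mem (hγ : γ 1 = g (γ 0)) {a : ℝ} (ha : a ∈ Icc (0 : ℝ) 1) :
    orbitCurve g γ a = γ a := by
  rcases ha.2.lt_or_eq with h | rfl
  · rw [orbitCurve, Nat.floor_eq_zero.mpr h, Int.fract_eq_self.mpr ⟨ha.1, h⟩,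
      Function.iterate_zero_apply]
  · rw [orbitCurve, Nat.floor_one, Int.fract_one, Function.iterate_one, hγ]

theorem continuousOn_orbitCurve [TopologicalSpace X] (hg : Continuous g)
    (hγ : ContinuousOn γ (Icc 0 1)) (h_one : γ 1 = g (γ 0)) (m : ℕ) :
    ContinuousOn (orbitCurve g γ) (Icc 0 m) := by
  induction m with
  | zero => simp
  | succ m ih =>
    have union_eq : Icc (0 : ℝ) m ∪ Icc (m : ℝ) (m + 1) = Icc 0 ((m + 1 : ℕ) : ℝ) := by
      rw [Icc_union_Icc_eq_Icc (by positivity) (by linarith), Nat.cast_add_one]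
    have last_piece : ContinuousOn (fun a : ℝ => g^[m] (γ (a - m))) (Icc (m : ℝ) (m + 1)) :=
      (hg.iterate m).comp_continuousOn
        (hγ.comp (by fun_prop) fun a ⟨_, _⟩ => by constructor <;> linarith)
    rw [← union_eq]
    refine ih.union_of_isClosed (last_piece.congr fun a ⟨h₁, h₂⟩ => ?_) isClosed_Icc isClosed_Icc
    have mem : a - m ∈ Icc (0 : ℝ) 1 := ⟨by linarith, by linarith⟩
    change orbitCurve g γ a = g^[m] (γ (a - m))
    rw [← orbitCurve_of_mem h_one mem, ← orbitCurve_add_natCast g γ m mem.1, sub_add_cancel]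

theorem orbitCurve_sub_one_eq (hg : Function.Injective g) {a b : ℝ} (ha : 1 ≤ a) (hb : 1 ≤ b)
    (hab : orbitCurve g γ a = orbitCurve g γ b) :
    orbitCurve g γ (a - 1) = orbitCurve g γ (b - 1) := by
  refine hg ?_
  rw [← orbitCurve_add_one g γ (sub_nonneg.mpr ha), ← orbitCurve_add_one g γ (sub_nonneg.mpr hb),
    sub_add_cancel, sub_add_cancel, hab]

theorem orbitCurve_sub_floor_eq (hg : Function.Injective g) {a b : ℝ} (ha : 0 ≤ a) (hab : a ≤ b)
    (h : orbitCurve g γ a = orbitCurve g γ b) :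
    orbitCurve g γ (a - ⌊a⌋₊) = orbitCurve g γ (b - ⌊a⌋₊) := by
  have floor_le := Nat.floor_le ha
  refine hg.iterate ⌊a⌋₊ ?_
  rw [← orbitCurve_add_natCast g γ _ (sub_nonneg.mpr floor_le),
    ← orbitCurve_add_natCast g γ _ (sub_nonneg.mpr (floor_le.trans hab)),
    sub_add_cancel, sub_add_cancel, h]

variable [TopologicalSpace X]

theorem IsTranslationArc.continuousOn_orbitCurve (hγ : IsTranslationArc g γ) (hg : Continuous g)
    {x y : ℝ} (hx : 0 ≤ x) : ContinuousOn (orbitCurve g γ) (Icc x y) := by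
  obtain ⟨m, hm⟩ := exists_nat_ge y
  exact (_root_.continuousOn_orbitCurve hg hγ.continuousOn hγ.one_eq m).mono (Icc_subset_Icc hx hm)

theorem IsTranslationArc.injOn_orbitCurve (hγ : IsTranslationArc g γ) :
    InjOn (orbitCurve g γ) (Icc 0 1) :=
  hγ.injOn.congr fun _ ha => (orbitCurve_of_mem hγ.one_eq ha).symm

theorem IsTranslationArc.ends_of_orbitCurve_eq (hγ : IsTranslationArc g γ) {a b : ℝ}
    (ha : a ∈ Icc (0 : ℝ) 1) (hb : b ∈ Icc (1 : ℝ) 2)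
    (hab : orbitCurve g γ a = orbitCurve g γ b) : a = 1 ∧ b = 1 ∨ a = 0 ∧ b = 2 := by
  have hb' : b - 1 ∈ Icc (0 : ℝ) 1 := ⟨by linarith [hb.1], by linarith [hb.2]⟩
  have image_eq : γ a = g (γ (b - 1)) := by
    rw [← orbitCurve_of_mem hγ.one_eq ha, hab, ← orbitCurve_of_mem hγ.one_eq hb',
      ← orbitCurve_add_one g γ hb'.1, sub_add_cancel]
  rcases hγ.ends_of_eq a ha _ hb' image_eq with ⟨h₁, h₂⟩ | ⟨h₁, h₂⟩
  · exact Or.inl ⟨h₁, by linarith⟩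
  · exact Or.inr ⟨h₁, by linarith⟩

theorem IsTranslationArc.two_lt_of_orbitCurve_eq (hγ : IsTranslationArc g γ)
    (h_two : orbitCurve g γ 0 ≠ orbitCurve g γ 2) {a b : ℝ} (ha : 0 ≤ a) (ha_lt : a < 1)
    (hab : a < b) (h : orbitCurve g γ a = orbitCurve g γ b) : 2 < b := by
  by_contra! hb
  rcases le_or_gt b 1 with hb_one | hb_one
  · exact hab.ne (hγ.injOn_orbitCurve ⟨ha, ha_lt.le⟩ ⟨by linarith, hb_one⟩ h)
  · rcases hγ.ends_of_orbitCurve_eq ⟨ha, ha_lt.le⟩ ⟨hb_one.le, hb⟩ h with ⟨h₁, -⟩ | ⟨rfl, rfl⟩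
    · exact ha_lt.ne h₁
    · exact h_two h

/-- A periodic point on a translation arc makes the orbit curve meet its first unit piece again;
`t` is the first time after `2` at which it does. -/
theorem IsTranslationArc.exists_first_return [T2Space X] (hγ : IsTranslationArc g γ)
    (hg : Continuous g) {c : ℝ} (hc : c ∈ Icc (0 : ℝ) 1) {n : ℕ} (hn : 2 ≤ n)
    (h_per : g^[n] (γ c) = γ c) :
    ∃ s ∈ Icc (0 : ℝ) 1, ∃ t, 2 ≤ t ∧ orbitCurve g γ s = orbitCurve g γ t ∧
      ∀ a ∈ Icc (0 : ℝ) 1, ∀ b, 2 ≤ b → b < t → orbitCurve g γ a ≠ orbitCurve g γ b := by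
  let S : Set ℝ := Icc (2 : ℝ) (c + n) ∩ orbitCurve g γ ⁻¹' (orbitCurve g γ '' Icc 0 1)
  have image_compact : IsCompact (orbitCurve g γ '' Icc 0 1) :=
    isCompact_Icc.image_of_continuousOn (hγ.continuousOn_orbitCurve hg le_rfl)
  have S_compact : IsCompact S := isCompact_Icc.of_isClosed_subset
    ((hγ.continuousOn_orbitCurve hg zero_le_two).preimage_isClosed_of_isClosed isClosed_Icc
      image_compact.isClosed) inter_subset_left
  have two_le : (2 : ℝ) ≤ n := by exact_mod_cast hn
  have mem_S : c + n ∈ S := ⟨⟨by linarith [hc.1], le_rfl⟩, c, hc, by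
    rw [orbitCurve_add_natCast g γ n hc.1, orbitCurve_of_mem hγ.one_eq hc, h_per]⟩
  obtain ⟨t, ⟨⟨two_le_t, t_le⟩, s, hs, hst⟩, t_min⟩ := S_compact.exists_isLeast ⟨_, mem_S⟩
  exact ⟨s, hs, t, two_le_t, hst, fun a ha b two_le_b b_lt h =>
    b_lt.not_ge (t_min ⟨⟨two_le_b, by linarith⟩, a, ha, h⟩)⟩

end OrbitCurve

section Plane

variable {g : ℂ → ℂ} {γ : ℝ → ℂ}

theorem IsTranslationArc.isOrbitLoop_zero_two (hγ : IsTranslationArc g γ) (hg : Continuous g)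
    (hg_inj : Function.Injective g) (h_two : orbitCurve g γ 0 = orbitCurve g γ 2) :
    IsOrbitLoop g (orbitCurve g γ) 0 2 where
  continuousOn := hγ.continuousOn_orbitCurve hg le_rfl
  shift a ha := orbitCurve_add_one g γ ha.1
  lt := by norm_num
  closed := h_two
  simple := by
    rintro ⟨a, b⟩ hab h
    obtain ⟨ha, hb, hlt, hsub⟩ := mem_chords.mp hab
    rcases lt_or_ge a 1 with ha_one | ha_one
    · rcases le_or_gt b 1 with hb_one | hb_one
      · exact hlt.ne (hγ.injOn_orbitCurve ⟨ha, ha_one.le⟩ ⟨by linarith, hb_one⟩ h)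
      · rcases hγ.ends_of_orbitCurve_eq ⟨ha, ha_one.le⟩ ⟨hb_one.le, hb⟩ h with
          ⟨h₁, -⟩ | ⟨h₁, h₂⟩ <;> linarith
    · have := hγ.injOn_orbitCurve ⟨by linarith, by linarith⟩ ⟨by linarith, by linarith⟩
        (orbitCurve_sub_one_eq hg_inj ha_one (by linarith) h)
      linarith

theorem IsTranslationArc.isOrbitLoop_of_first_return (hγ : IsTranslationArc g γ)
    (hg : Continuous g) (hg_inj : Function.Injective g) (hg_fix : ∀ z, g z ≠ z)
    (h_two : orbitCurve g γ 0 ≠ orbitCurve g γ 2) {s t : ℝ} (hs : s ∈ Icc (0 : ℝ) 1) (ht : 2 ≤ t)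
    (hst : orbitCurve g γ s = orbitCurve g γ t)
    (h_first : ∀ a ∈ Icc (0 : ℝ) 1, ∀ b, 2 ≤ b → b < t → orbitCurve g γ a ≠ orbitCurve g γ b) :
    IsOrbitLoop g (orbitCurve g γ) s t where
  continuousOn := hγ.continuousOn_orbitCurve hg hs.1
  shift a ha := orbitCurve_add_one g γ (hs.1.trans ha.1)
  lt := by
    by_contra! hle
    obtain rfl : s = 1 := by linarith [hs.2]
    obtain rfl : t = 1 + 1 := by linarith
    exact hg_fix _ ((orbitCurve_add_one g γ zero_le_one).symm.trans hst.symm)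
  closed := hst
  simple := by
    rintro ⟨a, b⟩ hab h
    obtain ⟨ha, hb, hlt, hsub⟩ := mem_chords.mp hab
    have a_nonneg : 0 ≤ a := hs.1.trans ha
    have floor_le := Nat.floor_le a_nonneg
    have lt_floor := Nat.lt_floor_add_one a
    have shifted := orbitCurve_sub_floor_eq hg_inj a_nonneg hlt.le h
    have two_lt := hγ.two_lt_of_orbitCurve_eq h_two (by linarith) (by linarith) (by linarith)
      shifted
    have le_shifted : t ≤ b - ⌊a⌋₊ := not_lt.mp fun h_lt =>
      h_first _ ⟨by linarith, by linarith⟩ _ two_lt.le h_lt shifted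
    obtain rfl : b = t := by linarith [(⌊a⌋₊).cast_nonneg (α := ℝ)]
    have a_eq := hγ.injOn_orbitCurve ⟨a_nonneg, by linarith⟩ hs (h.trans hst.symm)
    linarith

theorem IsTranslationArc.orbitCurve_arcs_disjoint (hγ : IsTranslationArc g γ)
    (hg_inj : Function.Injective g) {s t : ℝ} (hs : s ∈ Icc (0 : ℝ) 1) (ht : 2 ≤ t)
    (hst : s + 1 < t) (h_lt : t - s < 2) :
    ∀ a ∈ Icc (t - 1) (s + 1), ∀ b ∈ Icc t (s + 2), orbitCurve g γ a ≠ orbitCurve g γ b := by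
  intro a ⟨ha₁, ha₂⟩ b ⟨hb₁, hb₂⟩ h
  have s_le := hs.2
  rcases hγ.ends_of_orbitCurve_eq (a := a - 1) (b := b - 1) ⟨by linarith, by linarith⟩
    ⟨by linarith, by linarith⟩ (orbitCurve_sub_one_eq hg_inj (by linarith) (by linarith) h) with
    ⟨_, _⟩ | ⟨_, _⟩ <;> linarith

theorem IsTranslationArc.iterate_ne (hγ : IsTranslationArc g γ) (hg : IsotopicToId g)
    (hg_fix : ∀ z, g z ≠ z) {c : ℝ} (hc : c ∈ Icc (0 : ℝ) 1) {n : ℕ} (hn : 2 ≤ n) :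
    g^[n] (γ c) ≠ γ c := by
  intro h_per
  obtain ⟨H, hH⟩ := hg.exists_isIsotopy
  by_cases h_two : orbitCurve g γ 0 = orbitCurve g γ 2
  · exact (hγ.isOrbitLoop_zero_two hg.continuous hg.injective h_two).false_of_isotopy hH hg_fix
      (Or.inl (by norm_num))
  · obtain ⟨s, hs, t, ht, hst, h_first⟩ := hγ.exists_first_return hg.continuous hc hn h_per
    have loop := hγ.isOrbitLoop_of_first_return hg.continuous hg.injective hg_fix h_two hs ht hst
      h_first
    refine loop.false_of_isotopy hH hg_fix ((le_or_gt 2 (t - s)).imp_right fun h_lt => ?_)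
    exact hγ.orbitCurve_arcs_disjoint hg.injective hs ht loop.lt h_lt

end Plane

theorem exists_forall_max_norm_le {E : Type*} [NormedAddCommGroup E] [ProperSpace E] {g : E → E}
    (hg : Continuous g) (x : E) :
    ∃ y, ∀ u, max ‖y - x‖ ‖g y - x‖ ≤ max ‖u - x‖ ‖g u - x‖ :=
  Continuous.exists_forall_le (by fun_prop) <|
    tendsto_atTop_mono (fun _ => le_max_left _ _) <| by
      simpa only [dist_eq_norm] using tendsto_dist_right_cocompact_atTop x

/-- The broken line from `y` to `z` through `x`. -/
def elbow {E : Type*} [AddCommGroup E] [Module ℝ E] (x y z : E) (a : ℝ) : E :=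
  x + max (1 - 2 * a) 0 • (y - x) + max (2 * a - 1) 0 • (z - x)

section Elbow

variable {E : Type*} [NormedAddCommGroup E] [NormedSpace ℝ E] {x y z : E} {r : ℝ}

theorem elbow_of_le {a : ℝ} (ha : a ≤ 1 / 2) : elbow x y z a = x + (1 - 2 * a) • (y - x) := by
  rw [elbow, max_eq_left (by linarith), max_eq_right (by linarith), zero_smul, add_zero]

theorem elbow_of_ge {a : ℝ} (ha : 1 / 2 ≤ a) : elbow x y z a = x + (2 * a - 1) • (z - x) := by
  rw [elbow, max_eq_right (by linarith), max_eq_left (by linarith), zero_smul, add_zero]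

theorem elbow_zero : elbow x y z 0 = y := by
  simp [elbow_of_le (a := 0)]

theorem elbow_half : elbow x y z (1 / 2) = x := by
  rw [elbow_of_le le_rfl]
  norm_num

theorem elbow_one : elbow x y z 1 = z := by
  rw [elbow_of_ge (by norm_num)]
  norm_num

theorem norm_elbow_sub (hy : ‖y - x‖ = r) (hz : ‖z - x‖ = r) (a : ℝ) :
    ‖elbow x y z a - x‖ = |1 - 2 * a| * r := by
  rcases le_total a (1 / 2) with ha | ha
  · rw [elbow_of_le ha, add_sub_cancel_left, norm_smul, hy, Real.norm_eq_abs]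
  · rw [elbow_of_ge ha, add_sub_cancel_left, norm_smul, hz, Real.norm_eq_abs, abs_sub_comm]

theorem elbow_injective (hy : ‖y - x‖ = r) (hz : ‖z - x‖ = r) (hr : 0 < r) (hyz : y ≠ z) :
    Function.Injective (elbow x y z) := by
  have abs_eq {a b : ℝ} (hab : elbow x y z a = elbow x y z b) : |1 - 2 * a| = |1 - 2 * b| := by
    refine mul_right_cancel₀ hr.ne' ?_
    rw [← norm_elbow_sub hy hz, ← norm_elbow_sub hy hz, hab]
  have eq_of_le_of_ge {a b : ℝ} (ha : a ≤ 1 / 2) (hb : 1 / 2 ≤ b)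
      (hab : elbow x y z a = elbow x y z b) : a = b := by
    have radius_eq := abs_eq hab
    rw [abs_of_nonneg (by linarith), abs_of_nonpos (by linarith)] at radius_eq
    by_contra h_ne
    have radius_ne : 1 - 2 * a ≠ 0 := fun h => h_ne (by linarith)
    rw [elbow_of_le ha, elbow_of_ge hb, show 2 * b - 1 = 1 - 2 * a by linarith] at hab
    exact hyz (sub_left_injective (smul_right_injective E radius_ne (add_left_cancel hab)))
  intro a b hab
  have radius_eq := abs_eq hab
  rcases le_total a (1 / 2) with ha | ha <;> rcases le_total b (1 / 2) with hb | hb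
  · rw [abs_of_nonneg (by linarith), abs_of_nonneg (by linarith)] at radius_eq
    linarith
  · exact eq_of_le_of_ge ha hb hab
  · exact (eq_of_le_of_ge hb ha hab.symm).symm
  · rw [abs_of_nonpos (by linarith), abs_of_nonpos (by linarith)] at radius_eq
    linarith

theorem norm_eq_of_forall_le_max {g : E → E} (hg : Continuous g) (hg_open : IsOpenMap g)
    (hr : r ≠ 0) (h_min : ∀ u, r ≤ max ‖u - x‖ ‖g u - x‖) {u : E} (hu : ‖u - x‖ ≤ r)
    (hgu : ‖g u - x‖ ≤ r) : ‖u - x‖ = r ∧ ‖g u - x‖ = r := by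
  have mem_closure_ball {v : E} (hv : ‖v - x‖ ≤ r) : v ∈ closure (ball x r) := by
    rwa [closure_ball x hr, mem_closedBall, dist_eq_norm]
  refine ⟨hu.antisymm (not_lt.mp fun h_lt => ?_), hgu.antisymm (not_lt.mp fun h_lt => ?_)⟩
  · obtain ⟨v, ⟨w, hw, rfl⟩, hv⟩ := mem_closure_iff.mp (mem_closure_ball hgu) _
      (hg_open _ isOpen_ball) ⟨u, mem_ball_iff_norm.mpr h_lt, rfl⟩
    exact (h_min w).not_gt (max_lt (mem_ball_iff_norm.mp hw) (mem_ball_iff_norm.mp hv))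
  · obtain ⟨v, hgv, hv⟩ := mem_closure_iff.mp (mem_closure_ball hu) _
      (isOpen_lt (hg.sub continuous_const).norm continuous_const) h_lt
    exact (h_min v).not_gt (max_lt (mem_ball_iff_norm.mp hv) hgv)

/-- The smallest ball around `x` meeting its image touches it at the image of a boundary point `y`;
two radii join `y` to `g y` through `x`. -/
theorem exists_isTranslationArc [ProperSpace E] {g : E → E} (hg : Continuous g)
    (hg_open : IsOpenMap g) (hg_fix : ∀ z, g z ≠ z) (x : E) :
    ∃ γ, IsTranslationArc g γ ∧ γ (1 / 2) = x := by
  obtain ⟨y, y_min⟩ := exists_forall_max_norm_le hg x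
  set r := max ‖y - x‖ ‖g y - x‖ with hr
  have r_pos : 0 < r := by
    rw [hr, lt_max_iff, norm_pos_iff, norm_pos_iff, sub_ne_zero, sub_ne_zero]
    by_contra! h
    exact hg_fix y (h.2.trans h.1.symm)
  have norm_eq {u : E} := norm_eq_of_forall_le_max (u := u) hg hg_open r_pos.ne' y_min
  obtain ⟨hy, hgy⟩ := norm_eq (le_max_left _ _) (le_max_right _ _)
  have norm_elbow := norm_elbow_sub hy hgy
  have norm_elbow_le {a : ℝ} (ha : a ∈ Icc (0 : ℝ) 1) : ‖elbow x y (g y) a - x‖ ≤ r := by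
    rw [norm_elbow]
    exact mul_le_of_le_one_left r_pos.le (abs_le.mpr ⟨by linarith [ha.2], by linarith [ha.1]⟩)
  have end_of_norm_eq {a : ℝ} (h : ‖elbow x y (g y) a - x‖ = r) : a = 0 ∨ a = 1 := by
    rw [norm_elbow, mul_eq_right₀ r_pos.ne', abs_eq zero_le_one] at h
    exact h.imp (fun h => by linarith) fun h => by linarith
  refine ⟨elbow x y (g y), ⟨?_, ?_, ?_, fun a ha b hb hab => ?_⟩, elbow_half⟩
  · unfold elbow
    fun_prop
  · rw [elbow_zero, elbow_one]
  · exact (elbow_injective hy hgy r_pos (hg_fix y).symm).injOn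
  · obtain ⟨hb_norm, ha_norm⟩ := norm_eq (norm_elbow_le hb) (hab ▸ norm_elbow_le ha)
    rw [← hab] at ha_norm
    rcases end_of_norm_eq ha_norm with rfl | rfl <;> rcases end_of_norm_eq hb_norm with rfl | rfl
    · exact absurd hab.symm (hg_fix _)
    · exact Or.inr ⟨rfl, rfl⟩
    · exact Or.inl ⟨rfl, rfl⟩
    · exact absurd hab.symm (hg_fix _)

end Elbow

theorem IsotopicToId.iterate_ne {g : ℂ → ℂ} (hg : IsotopicToId g) (hg_fix : ∀ z, g z ≠ z) (x : ℂ)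
    {n : ℕ} (hn : n ≠ 0) : g^[n] x ≠ x := by
  rcases Nat.lt_or_ge 1 n with hn' | hn'
  · obtain ⟨γ, hγ, rfl⟩ := exists_isTranslationArc hg.continuous hg.isOpenMap hg_fix x
    exact hγ.iterate_ne hg hg_fix (by norm_num) hn'
  · obtain rfl : n = 1 := by omega
    exact hg_fix x

/-! ### Free disc chains -/

theorem IsotopicToId.comp {X : Type*} [TopologicalSpace X] {g h : X → X} (hg : IsotopicToId g)
    (hh : IsotopicToId h) : IsotopicToId (g ∘ h) := by
  refine ⟨hg.isOpenMap.comp hh.isOpenMap, ?_⟩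
  obtain ⟨G, hG⟩ := hg.exists_isIsotopy
  obtain ⟨H, hH⟩ := hh.exists_isIsotopy
  refine ⟨fun τ => G τ ∘ H τ, hG.continuous.comp (continuous_fst.prodMk hH.continuous),
    fun τ hτ => (hG.injective τ hτ).comp (hH.injective τ hτ), ?_, ?_⟩
  · simp only [hG.zero, hH.zero, Function.id_comp]
  · simp only [hG.one, hH.one]

section Push

variable {E : Type*} [NormedAddCommGroup E]

/-- The tent function of the ball `ball p r`, equal to `1` at `p` and to `0` off the ball. -/
def tent (p : E) (r : ℝ) (x : E) : ℝ := max (1 - ‖x - p‖ / r) 0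

theorem continuous_tent (p : E) (r : ℝ) : Continuous (tent p r) := by
  unfold tent
  fun_prop

theorem tent_self (p : E) (r : ℝ) : tent p r p = 1 := by
  simp [tent]

theorem tent_of_notMem {p x : E} {r : ℝ} (hr : 0 < r) (hx : x ∉ ball p r) : tent p r x = 0 := by
  rw [mem_ball_iff_norm, not_lt] at hx
  exact max_eq_right (sub_nonpos.mpr ((one_le_div hr).mpr hx))

theorem abs_tent_sub_le {r : ℝ} (hr : 0 < r) (p x y : E) :
    |tent p r x - tent p r y| ≤ ‖x - y‖ / r := by
  calc |tent p r x - tent p r y|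
      ≤ |1 - ‖x - p‖ / r - (1 - ‖y - p‖ / r)| := abs_max_sub_max_le_abs _ _ _
    _ = |‖y - p‖ - ‖x - p‖| / r := by
      rw [sub_sub_sub_cancel_left, ← sub_div, abs_div, abs_of_pos hr]
    _ ≤ ‖x - y‖ / r := by
      gcongr
      simpa [norm_sub_rev] using abs_norm_sub_norm_le (y - p) (x - p)

variable [NormedSpace ℝ E]

/-- The map moving `p` towards `q` inside `ball p r`, at time `τ`. -/
def push (p q : E) (r τ : ℝ) (x : E) : E := x + (τ * tent p r x) • (q - p)

theorem norm_push_sub_push_sub_le (p q : E) {r τ : ℝ} (hr : 0 < r) (hτ : τ ∈ Icc (0 : ℝ) 1)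
    (x y : E) : ‖push p q r τ x - push p q r τ y - (x - y)‖ ≤ ‖q - p‖ / r * ‖x - y‖ := by
  have difference : push p q r τ x - push p q r τ y - (x - y) =
      (τ * (tent p r x - tent p r y)) • (q - p) := by
    rw [push, push, mul_sub, sub_smul]
    abel
  calc ‖push p q r τ x - push p q r τ y - (x - y)‖
      = τ * |tent p r x - tent p r y| * ‖q - p‖ := by
        rw [difference, norm_smul, Real.norm_eq_abs, abs_mul, abs_of_nonneg hτ.1]
    _ ≤ 1 * (‖x - y‖ / r) * ‖q - p‖ := by
        gcongr
        exacts [hτ.2, abs_tent_sub_le hr p x y]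
    _ = ‖q - p‖ / r * ‖x - y‖ := by ring

theorem exists_isotopicToId_of_mem_ball [CompleteSpace E] {p q : E} {r : ℝ} (hq : q ∈ ball p r) :
    ∃ φ, IsotopicToId φ ∧ EqOn φ id (ball p r)ᶜ ∧ φ p = q := by
  rw [mem_ball_iff_norm] at hq
  have r_pos : 0 < r := (norm_nonneg _).trans_lt hq
  let c : NNReal := ⟨‖q - p‖ / r, by positivity⟩
  have approximates_id {τ : ℝ} (hτ : τ ∈ Icc (0 : ℝ) 1) :
      ApproximatesLinearOn (push p q r τ) (ContinuousLinearEquiv.refl ℝ E : E →L[ℝ] E) univ c :=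
    fun x _ y _ => norm_push_sub_push_sub_le p q r_pos hτ x y
  have c_small : Subsingleton E ∨
      c < ‖((ContinuousLinearEquiv.refl ℝ E).symm : E →L[ℝ] E)‖₊⁻¹ := by
    rcases subsingleton_or_nontrivial E with h | h
    · exact Or.inl h
    · rw [ContinuousLinearEquiv.refl_symm, ContinuousLinearEquiv.coe_refl,
        ContinuousLinearMap.nnnorm_id, inv_one]
      exact Or.inr ((div_lt_one r_pos).mpr hq)
  have push_continuous : Continuous fun a : ℝ × E => push p q r a.1 a.2 := by
    have := continuous_tent p r
    unfold push
    fun_prop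
  refine ⟨push p q r 1, ⟨?_, push p q r, push_continuous, fun τ hτ => ?_, ?_, rfl⟩, fun x hx => ?_,
    ?_⟩
  · exact ((approximates_id (right_mem_Icc.mpr zero_le_one)).toHomeomorph _ c_small).isOpenMap
  · exact injOn_univ.mp ((approximates_id hτ).injOn c_small)
  · ext x
    simp [push]
  · simp [push, tent_of_notMem r_pos hx]
  · simp [push, tent_self]

theorem exists_isotopicToId_of_isPreconnected [CompleteSpace E] {V : Set E} (hV : IsOpen V)
    (hV_conn : IsPreconnected V) {p q : E} (hp : p ∈ V) (hq : q ∈ V) :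
    ∃ φ, IsotopicToId φ ∧ EqOn φ id Vᶜ ∧ φ p = q := by
  refine hV_conn.induction₂' (fun p q => ∃ φ, IsotopicToId φ ∧ EqOn φ id Vᶜ ∧ φ p = q)
    (fun x hx => ?_) ?_ hp hq
  · obtain ⟨r, hr, ball_subset⟩ := isOpen_iff.mp hV x hx
    filter_upwards [mem_nhdsWithin_of_mem_nhds (ball_mem_nhds x (half_pos hr))] with y hy
    have ball_half_subset : ball y (r / 2) ⊆ ball x r :=
      ball_subset_ball' (by linarith [mem_ball.mp hy])
    constructor
    · obtain ⟨φ, hφ, φ_off, φ_apply⟩ :=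
        exists_isotopicToId_of_mem_ball (ball_subset_ball (half_le_self hr.le) hy)
      exact ⟨φ, hφ, φ_off.mono (compl_subset_compl.mpr ball_subset), φ_apply⟩
    · obtain ⟨φ, hφ, φ_off, φ_apply⟩ := exists_isotopicToId_of_mem_ball (mem_ball_comm.mp hy)
      exact ⟨φ, hφ, φ_off.mono (compl_subset_compl.mpr (ball_half_subset.trans ball_subset)),
        φ_apply⟩
  · rintro x y z - - - ⟨φ, hφ, φ_off, rfl⟩ ⟨ψ, hψ, ψ_off, rfl⟩
    exact ⟨ψ ∘ φ, hψ.comp hφ, fun w hw => by simp [φ_off hw, ψ_off hw], rfl⟩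

end Push

/-- Pairwise disjoint, open, connected sets, each disjoint from its image under `G`. -/
structure IsFreeFamily {X ι : Type*} [TopologicalSpace X] (G : X → X) (V : ι → Set X) : Prop where
  isOpen : ∀ j, IsOpen (V j)
  isPreconnected : ∀ j, IsPreconnected (V j)
  disjoint : Pairwise fun j k => Disjoint (V j) (V k)
  free : ∀ j, ∀ x ∈ V j, G x ∉ V j

/-- Some orbit segment of positive length goes from `A` to `B`. -/
def Reaches {X : Type*} (G : X → X) (A B : Set X) : Prop := ∃ n, n ≠ 0 ∧ ∃ x ∈ A, G^[n] x ∈ B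

section Reaches

variable {X : Type*} {G φ : X → X} {A B V : Set X}

theorem Reaches.exists_first (h : Reaches G A B) :
    ∃ n, ∃ x ∈ A, G^[n + 1] x ∈ B ∧ ∀ i < n, G^[i + 1] x ∉ B := by
  obtain ⟨n, hn, x, hx, hxB⟩ := h
  obtain ⟨n, rfl⟩ := Nat.exists_eq_succ_of_ne_zero hn
  have returns : ∃ n, G^[n + 1] x ∈ B := ⟨n, hxB⟩
  exact ⟨Nat.find returns, x, hx, Nat.find_spec returns, fun _ => Nat.find_min returns⟩

theorem comp_iterate_eq (hφ : EqOn φ id Vᶜ) {x : X} {n : ℕ} (hx : ∀ i < n, G^[i + 1] x ∉ V) :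
    (φ ∘ G)^[n] x = G^[n] x := by
  induction n with
  | zero => rfl
  | succ n ih =>
    rw [Function.iterate_succ_apply', ih fun i hi => hx i (hi.trans n.lt_succ_self),
      Function.comp_apply, ← Function.iterate_succ_apply' G, hφ (hx n n.lt_succ_self), id]

theorem comp_iterate_succ_eq (hφ : EqOn φ id Vᶜ) {x : X} {n : ℕ}
    (hx : ∀ i < n, G^[i + 1] x ∉ V) : (φ ∘ G)^[n + 1] x = φ (G^[n + 1] x) := by
  rw [Function.iterate_succ_apply', comp_iterate_eq hφ hx, Function.comp_apply,
    ← Function.iterate_succ_apply' G]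

theorem comp_iterate_eq_of_not_reaches (hφ : EqOn φ id Vᶜ) (h : ¬ Reaches G A V) {x : X}
    (hx : x ∈ A) (n : ℕ) : (φ ∘ G)^[n] x = G^[n] x :=
  comp_iterate_eq hφ fun i _ hi => h ⟨i + 1, i.succ_ne_zero, x, hx, hi⟩

theorem Reaches.comp_of_not_reaches (h : Reaches G A B) (hφ : EqOn φ id Vᶜ)
    (h_avoid : ¬ Reaches G A V) : Reaches (φ ∘ G) A B := by
  obtain ⟨n, hn, x, hx, hxB⟩ := h
  exact ⟨n, hn, x, hx, (comp_iterate_eq_of_not_reaches hφ h_avoid hx n).symm ▸ hxB⟩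

theorem apply_mem_iff_of_eqOn_compl (hφ : Function.Injective φ) (h_off : EqOn φ id Vᶜ) {z : X} :
    φ z ∈ V ↔ z ∈ V := by
  refine ⟨fun h => by_contra fun hz => hz (by rwa [h_off hz] at h), fun hz => by_contra fun h => ?_⟩
  exact h ((hφ (h_off h)).symm ▸ hz)

variable [TopologicalSpace X] {ι : Type*} {W : ι → Set X}

theorem IsFreeFamily.comp (hW : IsFreeFamily G W) (hφ : Function.Injective φ) {j : ι}
    (h_off : EqOn φ id (W j)ᶜ) : IsFreeFamily (φ ∘ G) W where
  isOpen := hW.isOpen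
  isPreconnected := hW.isPreconnected
  disjoint := hW.disjoint
  free k x hx h := by
    by_cases hGx : G x ∈ W j
    · obtain rfl : j = k := by_contra fun hjk =>
        disjoint_left.mp (hW.disjoint hjk) ((apply_mem_iff_of_eqOn_compl hφ h_off).mpr hGx) h
      exact hW.free j x hx hGx
    · rw [Function.comp_apply, h_off hGx] at h
      exact hW.free k x hx h

theorem IsFreeFamily.comp_apply_ne (hW : IsFreeFamily G W) (hG : ∀ z, G z ≠ z)
    (hφ : Function.Injective φ) {j : ι} (h_off : EqOn φ id (W j)ᶜ) (z : X) : (φ ∘ G) z ≠ z := by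
  intro hz
  by_cases hGz : G z ∈ W j
  · have := (apply_mem_iff_of_eqOn_compl hφ h_off).mpr hGz
    rw [← Function.comp_apply (f := φ), hz] at this
    exact hW.free j z this hGz
  · rw [Function.comp_apply, h_off hGz] at hz
    exact hG z hz

end Reaches

theorem exists_chain_of_transGen {ι : Type*} {r : ι → ι → Prop} {j k : ι}
    (h : Relation.TransGen r j k) :
    ∃ m, 0 < m ∧ ∃ c : ℕ → ι, c 0 = j ∧ c m = k ∧ ∀ i < m, r (c i) (c (i + 1)) := by
  induction h with
  | @single k h => exact ⟨1, one_pos, fun i => if i = 0 then j else k, rfl, rfl, by simpa using h⟩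
  | @tail k l _ hkl ih =>
    obtain ⟨m, hm, c, c_zero, c_last, hc⟩ := ih
    refine ⟨m + 1, m.succ_pos, fun i => if i ≤ m then c i else l, by simpa using c_zero, by simp,
      fun i hi => ?_⟩
    rcases Nat.lt_succ_iff_lt_or_eq.mp hi with hi | rfl
    · simpa [hi.le, Nat.succ_le_of_lt hi] using hc i hi
    · simpa [c_last] using hkl

/-- In a shortest cycle, the second vertex is reached from the first one only, so that the cut
turns the cycle into a shorter one. -/
theorem not_transGen_self_of_cut {ι : Type*} {R : Set (ι → ι → Prop)}
    (h_irrefl : ∀ r ∈ R, ∀ j, ¬ r j j)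
    (h_cut : ∀ r ∈ R, ∀ i j k, r i j → r j k →
      ∃ r' ∈ R, r' i k ∧ ∀ a b, ¬ r a j → r a b → r' a b)
    {r : ι → ι → Prop} (hr : r ∈ R) (j : ι) : ¬ Relation.TransGen r j j := by
  suffices no_cycle : ∀ m, 0 < m → ∀ r ∈ R, ∀ c : ℕ → ι, c m = c 0 →
      ¬ ∀ i < m, r (c i) (c (i + 1)) by
    intro h
    obtain ⟨m, hm, c, c_zero, c_last, hc⟩ := exists_chain_of_transGen h
    exact no_cycle m hm r hr c (c_last.trans c_zero.symm) hc
  intro m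
  induction m using Nat.strong_induction_on with
  | _ m ih =>
    intro hm r hr c c_closed hc
    rcases Nat.eq_or_lt_of_le (Nat.succ_le_of_lt hm) with rfl | one_lt
    · exact h_irrefl r hr (c 0) (by simpa [c_closed] using hc 0 one_pos)
    have no_return : ∀ i, 0 < i → i < m → ¬ r (c i) (c 1) := by
      refine fun i hi him h => ih i him hi r hr (fun k => if k = i then c 1 else c (k + 1))
        (by simp [hi.ne]) fun k hk => ?_
      rw [if_neg hk.ne]
      split_ifs with hki
      · exact hki ▸ h
      · exact hc (k + 1) (by omega)
    obtain ⟨r', hr', r'_skip, r'_keep⟩ := h_cut r hr _ _ _ (hc 0 hm) (hc 1 one_lt)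
    refine ih (m - 1) (by omega) (by omega) r' hr' (fun k => if k = 0 then c 0 else c (k + 1))
      (by simp [show m - 1 ≠ 0 by omega, Nat.sub_add_cancel one_lt.le, c_closed]) fun k hk => ?_
    rw [if_neg k.succ_ne_zero]
    split_ifs with hk_zero
    · subst hk_zero
      exact r'_skip
    · exact r'_keep _ _ (no_return _ k.succ_pos (by omega)) (hc _ (by omega))

section Franks

variable {ι : Type*} {V : ι → Set ℂ} {G : ℂ → ℂ}

theorem IsFreeFamily.not_reaches_self (hV : IsFreeFamily G V) (hG : IsotopicToId G)
    (hG_fix : ∀ z, G z ≠ z) (j : ι) : ¬ Reaches G (V j) (V j) := by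
  intro h
  obtain ⟨n, x, hx, hxn, h_first⟩ := h.exists_first
  obtain ⟨φ, hφ, φ_off, φ_apply⟩ :=
    exists_isotopicToId_of_isPreconnected (hV.isOpen j) (hV.isPreconnected j) hxn hx
  refine (hφ.comp hG).iterate_ne (hV.comp_apply_ne hG_fix hφ.injective φ_off) x n.succ_ne_zero ?_
  rw [comp_iterate_succ_eq φ_off h_first, φ_apply]

theorem IsFreeFamily.exists_push (hV : IsFreeFamily G V) {i j k : ι}
    (hij : Reaches G (V i) (V j)) (hjk : Reaches G (V j) (V k)) (hjj : ¬ Reaches G (V j) (V j)) :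
    ∃ φ, IsotopicToId φ ∧ EqOn φ id (V j)ᶜ ∧ Reaches (φ ∘ G) (V i) (V k) := by
  obtain ⟨n, x, hx, hxn, h_first⟩ := hij.exists_first
  obtain ⟨m, -, y, hy, hym⟩ := hjk
  obtain ⟨φ, hφ, φ_off, φ_apply⟩ :=
    exists_isotopicToId_of_isPreconnected (hV.isOpen j) (hV.isPreconnected j) hxn hy
  refine ⟨φ, hφ, φ_off, m + (n + 1), by omega, x, hx, ?_⟩
  rwa [Function.iterate_add_apply, comp_iterate_succ_eq φ_off h_first, φ_apply,
    comp_iterate_eq_of_not_reaches φ_off hjj hy]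

/-- Franks' lemma: pushing inside a disc joins two consecutive orbit segments of a closed chain. -/
theorem IsFreeFamily.not_transGen_reaches (hV : IsFreeFamily G V) (hG : IsotopicToId G)
    (hG_fix : ∀ z, G z ≠ z) (j : ι) :
    ¬ Relation.TransGen (fun i k => Reaches G (V i) (V k)) j j := by
  refine not_transGen_self_of_cut (R := {r | ∃ G, IsotopicToId G ∧ (∀ z, G z ≠ z) ∧
    IsFreeFamily G V ∧ r = fun i k => Reaches G (V i) (V k)}) ?_ ?_ ⟨G, hG, hG_fix, hV, rfl⟩ j
  · rintro _ ⟨G, hG, hG_fix, hV, rfl⟩ j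
    exact hV.not_reaches_self hG hG_fix j
  · rintro _ ⟨G, hG, hG_fix, hV, rfl⟩ i j k hij hjk
    obtain ⟨φ, hφ, φ_off, h_skip⟩ := hV.exists_push hij hjk (hV.not_reaches_self hG hG_fix j)
    exact ⟨_, ⟨φ ∘ G, hφ.comp hG, hV.comp_apply_ne hG_fix hφ.injective φ_off,
      hV.comp hφ.injective φ_off, rfl⟩, h_skip,
      fun a b h_avoid hab => hab.comp_of_not_reaches φ_off h_avoid⟩

end Franks

/-! ### Lifting the isotopy around a fixed point -/

theorem isLocalHomeomorph_exp : IsLocalHomeomorph Complex.exp :=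
  isOpen_ne.isOpenEmbedding_subtypeVal.isLocalHomeomorph.comp
    Complex.isCoveringMap_exp.isLocalHomeomorph

theorem isOpenMap_of_isLocalHomeomorph_exp_comp {X : Type*} [TopologicalSpace X] {g : X → ℂ}
    (hg : Continuous g) (h : IsLocalHomeomorph fun x => Complex.exp (g x)) : IsOpenMap g :=
  (IsLocalHomeomorph.of_comp h isLocalHomeomorph_exp hg).isOpenMap

/-- A lift of the isotopy `I`, seen from the moving point `I.F t z'`, to the logarithmic
coordinate `w ↦ z' + exp w` of the punctured plane. -/
structure IsAngularLift {f : ℂ ≃ₜ ℂ} (I : HIsotopy f) (z' : ℂ) (F : ℝ → ℂ → ℂ) : Prop where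
  continuous : Continuous fun p : ℝ × ℂ => F p.1 p.2
  exp : ∀ t w, Complex.exp (F t w) = I.F t (z' + Complex.exp w) - I.F t z'
  zero : F 0 = id
  add_turn : ∀ t w (k : ℤ), F t (w + k * turn) = F t w + k * turn

/-- The time-one map of a lift, followed by `p` backward turns. -/
def shiftedLift (F : ℝ → ℂ → ℂ) (p : ℤ) (w : ℂ) : ℂ := F 1 w - p * turn

section AngularLift

variable {f : ℂ ≃ₜ ℂ} {I : HIsotopy f} {z' : ℂ} {F : ℝ → ℂ → ℂ}

theorem exists_isAngularLift (I : HIsotopy f) (z' : ℂ) : ∃ F, IsAngularLift I z' F := by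
  have I_cont := I.cont
  obtain ⟨L, L_cont, exp_L⟩ := exists_continuous_log
    (q := fun p : ℝ × ℂ => I.F p.1 (z' + Complex.exp p.2) - I.F p.1 z') (by fun_prop)
    (fun p => sub_ne_zero.mpr fun h => by simpa using (I.F p.1).injective h)
  have exp_L_zero (w : ℂ) : Complex.exp (L (0, w)) = Complex.exp w := by simp [exp_L, I.zero]
  have L_zero (w : ℂ) : L (0, w) - w = L (0, 0) - 0 :=
    log_sub_log_eq (M := id) isPreconnected_univ (L := fun w => L (0, w)) (by fun_prop)
      (by fun_prop) (fun w _ => exp_L_zero w) (mem_univ w) (mem_univ 0)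
  obtain ⟨k, hk⟩ := exists_eq_add_int_mul_turn (exp_L_zero 0)
  refine ⟨fun t w => L (t, w) - k * turn, by fun_prop, fun t w => ?_, funext fun w => ?_,
    fun t w j => ?_⟩
  · have := exp_add_int_mul_turn (L (t, w)) (-k)
    rwa [Int.cast_neg, neg_mul, ← sub_eq_add_neg, exp_L] at this
  · simp only [id]
    linear_combination L_zero w + hk
  · have shift := log_sub_log_eq isPreconnected_univ
      (L := fun p => L (p.1, p.2 + j * turn)) (M := L) (by fun_prop) (by fun_prop)
      (fun p _ => by rw [exp_L, exp_L, exp_add_int_mul_turn]) (mem_univ (t, w)) (mem_univ (0, w))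
    linear_combination shift + L_zero (w + j * turn) - L_zero w

namespace IsAngularLift

theorem continuous_apply (hF : IsAngularLift I z' F) (t : ℝ) : Continuous (F t) :=
  hF.continuous.comp (Continuous.prodMk_right t)

theorem injective (hF : IsAngularLift I z' F) (t : ℝ) : Function.Injective (F t) := by
  intro v w hvw
  have exp_eq : Complex.exp v = Complex.exp w := by
    have := congrArg Complex.exp hvw
    rwa [hF.exp, hF.exp, sub_left_inj, (I.F t).injective.eq_iff, add_right_inj] at this
  obtain ⟨k, rfl⟩ := exists_eq_add_int_mul_turn exp_eq
  rw [hF.add_turn] at hvw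
  rw [add_eq_left.mp hvw, add_zero]

theorem isOpenMap (hF : IsAngularLift I z' F) (t : ℝ) : IsOpenMap (F t) := by
  refine isOpenMap_of_isLocalHomeomorph_exp_comp (hF.continuous_apply t) ?_
  simp only [hF.exp]
  exact ((Homeomorph.addLeft z').trans ((I.F t).trans
    (Homeomorph.subRight (I.F t z')))).isLocalHomeomorph.comp isLocalHomeomorph_exp

theorem isotopicToId_shiftedLift (hF : IsAngularLift I z' F) (p : ℤ) :
    IsotopicToId (shiftedLift F p) where
  isOpenMap := (Homeomorph.subRight (p * turn)).isOpenMap.comp (hF.isOpenMap 1)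
  exists_isIsotopy := by
    have F_cont := hF.continuous
    refine ⟨fun t w => F t w - t * (p * turn), by fun_prop,
      fun t _ => (sub_left_injective).comp (hF.injective t), ?_, ?_⟩
    · ext w
      simp [hF.zero]
    · ext w
      simp [shiftedLift]

theorem enlace_eq (hF : IsAngularLift I z' F) (w : ℂ) :
    Enlace I (z' + Complex.exp w) z' = turns (F 1 w) - turns w := by
  have F_cont := hF.continuous
  have := angVar_eq_turns_sub (L := fun t => F t w) (by fun_prop) fun t _ => hF.exp t w
  rwa [hF.zero] at this

theorem semiconj (hF : IsAngularLift I z' F) (hz' : z' ∈ FixPts f) :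
    Function.Semiconj (fun w => z' + Complex.exp w) (F 1) f := by
  intro w
  have f_z' : f z' = z' := hz'
  simp only [hF.exp, I.one, f_z', add_sub_cancel]

theorem birkhoffSum_enlace_eq (hF : IsAngularLift I z' F) (hz' : z' ∈ FixPts f) (w : ℂ) (n : ℕ) :
    birkhoffSum f (Enlace I · z') n (z' + Complex.exp w)
      = turns ((F 1)^[n] w) - turns w := by
  have step (r : ℕ) : Enlace I (f^[r] (z' + Complex.exp w)) z'
      = turns ((F 1)^[r + 1] w) - turns ((F 1)^[r] w) := by
    rw [← ((hF.semiconj hz').iterate_right r).eq w, hF.enlace_eq, Function.iterate_succ_apply']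
  simp only [birkhoffSum, step]
  exact Finset.sum_range_sub (fun r => turns ((F 1)^[r] w)) n

theorem shiftedLift_ne (hF : IsAngularLift I z' F) (hz' : z' ∈ FixPts f) {p : ℤ}
    (hp : ∀ z ∈ FixPts f, z ≠ z' → |Enlace I z z'| < |(p : ℝ)|) (w : ℂ) :
    shiftedLift F p w ≠ w := by
  intro hw
  have F_w : F 1 w = w + p * turn := eq_add_of_sub_eq hw
  have fixed : z' + Complex.exp w ∈ FixPts f := by
    have := (hF.semiconj hz').eq w
    rw [F_w, exp_add_int_mul_turn] at this
    exact this.symm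
  have enlace_lt := hp _ fixed (by simp [Complex.exp_ne_zero])
  rw [hF.enlace_eq, F_w, turns_add, turns_int_mul_turn, add_sub_cancel_left] at enlace_lt
  exact enlace_lt.false

theorem iterate_add_turn (hF : IsAngularLift I z' F) (n : ℕ) (w : ℂ) (k : ℤ) :
    (F 1)^[n] (w + k * turn) = (F 1)^[n] w + k * turn :=
  (Function.Semiconj.iterate_right (f := fun w => w + k * turn)
    (fun w => (hF.add_turn 1 w k).symm) n w).symm

theorem iterate_shiftedLift (hF : IsAngularLift I z' F) (p : ℤ) (n : ℕ) (w : ℂ) :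
    (shiftedLift F p)^[n] w = (F 1)^[n] w - n * p * turn := by
  have shift : Function.Commute (· + -(p * turn)) (F 1) := fun w => by
    simpa using (hF.add_turn 1 w (-p)).symm
  have shiftedLift_eq : shiftedLift F p = (· + -(p * turn)) ∘ F 1 :=
    funext fun w => sub_eq_add_neg _ _
  rw [shiftedLift_eq, shift.comp_iterate, Function.comp_apply, add_right_iterate, nsmul_eq_mul]
  ring

end IsAngularLift

end AngularLift

/-! ### Free discs and their lifts -/

namespace FreeDisc

variable {f : ℂ ≃ₜ ℂ} {U : Set ℂ}

theorem apply_notMem (hU : FreeDisc f U) {z : ℂ} (hz : z ∈ U) : f z ∉ U :=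
  disjoint_left.mp hU.2.2 (mem_image_of_mem f hz)

theorem notMem_of_mem_fixPts (hU : FreeDisc f U) {z' : ℂ} (hz' : z' ∈ FixPts f) : z' ∉ U :=
  fun h => hU.apply_notMem h (hz'.symm ▸ h)

theorem contractibleSpace (hU : FreeDisc f U) : ContractibleSpace U :=
  hU.2.1.some.contractibleSpace

theorem exists_isPathIn (hU : FreeDisc f U) {x y : ℂ} (hx : x ∈ U) (hy : y ∈ U) :
    ∃ γ, Continuous γ ∧ IsPathIn U x y γ := by
  have := hU.contractibleSpace
  let γ : Path (⟨x, hx⟩ : U) ⟨y, hy⟩ := PathConnectedSpace.somePath _ _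
  exact ⟨fun t => γ.extend t, by fun_prop, by fun_prop, fun t _ => (γ.extend t).2, by simp, by simp⟩

end FreeDisc

theorem iterate_retTime_mem {f : ℂ ≃ₜ ℂ} {U : Set ℂ} {z : ℂ} (hz : z ∈ U) :
    f^[retTime f U z] z ∈ U := by
  rcases eq_empty_or_nonempty {n : ℕ | 0 < n ∧ f^[n] z ∈ U} with h | h
  · rwa [retTime, h, Nat.sInf_empty]
  · exact (Nat.sInf_mem h).2

/-- `l` is a continuous logarithm of `z - z'` on `U`. -/
structure IsLogOn (U : Set ℂ) (z' : ℂ) (l : ℂ → ℂ) : Prop where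
  continuousOn : ContinuousOn l U
  exp : ∀ z ∈ U, Complex.exp (l z) = z - z'

/-- The lift of `U` to the logarithmic coordinate given by the branch `l + j * turn`. -/
def liftedDisc (U : Set ℂ) (l : ℂ → ℂ) (j : ℤ) : Set ℂ := (fun z => l z + j * turn) '' U

section LiftedDisc

variable {f : ℂ ≃ₜ ℂ} {I : HIsotopy f} {z' : ℂ} {F : ℝ → ℂ → ℂ} {U : Set ℂ} {l : ℂ → ℂ}

theorem FreeDisc.exists_isLogOn (hU : FreeDisc f U) (hz' : z' ∈ FixPts f) :
    ∃ l, IsLogOn U z' l := by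
  have := hU.contractibleSpace
  obtain ⟨l, l_cont, exp_l⟩ := exists_continuousOn_log (X := U) (q := fun z => z - z') (by fun_prop)
    fun z hz => sub_ne_zero.mpr (ne_of_mem_of_not_mem hz (hU.notMem_of_mem_fixPts hz'))
  exact ⟨l, l_cont, exp_l⟩

theorem IsLogOn.add_exp (hl : IsLogOn U z' l) {z : ℂ} (hz : z ∈ U) (j : ℤ) :
    z' + Complex.exp (l z + j * turn) = z := by
  rw [exp_add_int_mul_turn, hl.exp z hz, add_sub_cancel]

theorem IsLogOn.isOpen_liftedDisc (hl : IsLogOn U z' l) (hU : IsOpen U) (j : ℤ) :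
    IsOpen (liftedDisc U l j) := by
  have l_cont := hl.continuousOn.domRestrict
  have branch_open : IsOpenMap fun z : U => l z + j * turn := by
    refine isOpenMap_of_isLocalHomeomorph_exp_comp (l_cont.add continuous_const) ?_
    have exp_eq : (fun z : U => Complex.exp (l z + j * turn)) = Homeomorph.subRight z' ∘ (↑) :=
      funext fun z => by
        rw [exp_add_int_mul_turn, hl.exp z z.2]
        rfl
    rw [exp_eq]
    exact (Homeomorph.subRight z').isLocalHomeomorph.comp
      hU.isOpenEmbedding_subtypeVal.isLocalHomeomorph
  simpa [liftedDisc, image_eq_range] using branch_open.isOpen_range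

theorem FreeDisc.isFreeFamily_liftedDisc (hU : FreeDisc f U) (hz' : z' ∈ FixPts f)
    (hl : IsLogOn U z' l) (hF : IsAngularLift I z' F) (p : ℤ) :
    IsFreeFamily (shiftedLift F p) (liftedDisc U l) where
  isOpen := hl.isOpen_liftedDisc hU.1
  isPreconnected j := by
    have := hU.contractibleSpace
    have U_preconn : IsPreconnected U := isPreconnected_iff_preconnectedSpace.mpr inferInstance
    exact U_preconn.image _ (hl.continuousOn.add continuousOn_const)
  disjoint j k hjk := by
    refine disjoint_left.mpr ?_
    rintro _ ⟨x, hx, rfl⟩ ⟨y, hy, hyx⟩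
    dsimp only at hyx
    obtain rfl : y = x := by rw [← hl.add_exp hy k, ← hl.add_exp hx j, ← hyx]
    exact hjk (by simpa [turn_ne_zero] using hyx.symm)
  free := by
    rintro j _ ⟨x, hx, rfl⟩ ⟨y, hy, hyx⟩
    have y_eq : y = f x := by
      rw [← hl.add_exp hy (j + p), ← hl.add_exp hx j, ← (hF.semiconj hz').eq,
        eq_add_of_sub_eq hyx.symm, Int.cast_add, add_mul, add_assoc]
    exact hU.apply_notMem hx (y_eq ▸ hy)

theorem IsLogOn.exists_iterate_eq (hl : IsLogOn U z' l) (hF : IsAngularLift I z' F)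
    (hz' : z' ∈ FixPts f) {z : ℂ} (hz : z ∈ U) {n : ℕ} (hn : f^[n] z ∈ U) :
    ∃ j : ℤ, (F 1)^[n] (l z) = l (f^[n] z) + j * turn := by
  apply exists_eq_add_int_mul_turn
  have := ((hF.semiconj hz').iterate_right n).eq (l z)
  simp only [hl.exp z hz, add_sub_cancel] at this
  rw [hl.exp _ hn, ← this, add_sub_cancel_left]

theorem IsLogOn.birkhoffSum_enlace_eq (hl : IsLogOn U z' l) (hF : IsAngularLift I z' F)
    (hz' : z' ∈ FixPts f) {z : ℂ} (hz : z ∈ U) (n : ℕ) :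
    birkhoffSum f (Enlace I · z') n z = turns ((F 1)^[n] (l z)) - turns (l z) := by
  rw [← hF.birkhoffSum_enlace_eq hz', hl.exp z hz, add_sub_cancel]

theorem FreeDisc.alphaU_eq (hU : FreeDisc f U) (hl : IsLogOn U z' l) {z : ℂ} (hz : z ∈ U) :
    alphaU I U z' z = birkhoffSum f (Enlace I · z') (retTime f U z) z +
      (turns (l z) - turns (l (f^[retTime f U z] z))) := by
  have path_exists : ∃ γ, IsPathIn U (f^[retTime f U z] z) z γ :=
    (hU.exists_isPathIn (iterate_retTime_mem hz) hz).imp fun _ => And.right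
  obtain ⟨γ_cont, γ_mem, γ_zero, γ_one⟩ := path_exists.choose_spec
  rw [alphaU, dif_pos path_exists, angVar_eq_turns_sub (hl.continuousOn.comp γ_cont γ_mem)
    fun t ht => hl.exp _ (γ_mem t ht)]
  simp only [Function.comp_apply, γ_zero, γ_one, birkhoffSum]

theorem FreeDisc.alphaU_eq_add_angVar (hU : FreeDisc f U) (hz' : z' ∈ FixPts f) {z : ℂ}
    (hz : z ∈ U) {γ : ℝ → ℂ} (hγ : IsPathIn U (f^[retTime f U z] z) z γ) :
    alphaU I U z' z = birkhoffSum f (Enlace I · z') (retTime f U z) z +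
      angVar fun t => γ t - z' := by
  obtain ⟨l, hl⟩ := hU.exists_isLogOn hz'
  obtain ⟨γ_cont, γ_mem, γ_zero, γ_one⟩ := hγ
  rw [hU.alphaU_eq hl hz, angVar_eq_turns_sub (hl.continuousOn.comp γ_cont γ_mem)
    fun t ht => hl.exp _ (γ_mem t ht)]
  simp only [Function.comp_apply, γ_zero, γ_one]

theorem FreeDisc.alphaU_eq_of_iterate (hU : FreeDisc f U) (hl : IsLogOn U z' l)
    (hF : IsAngularLift I z' F) (hz' : z' ∈ FixPts f) {z : ℂ} (hz : z ∈ U) {j : ℤ}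
    (hj : (F 1)^[retTime f U z] (l z) = l (f^[retTime f U z] z) + j * turn) :
    alphaU I U z' z = j := by
  rw [hU.alphaU_eq hl hz, hl.birkhoffSum_enlace_eq hF hz' hz, hj, turns_add, turns_int_mul_turn]
  ring

theorem transGen_add_mul {r : ℤ → ℤ → Prop} {c : ℤ} (h : ∀ i, r i (i + c)) {m : ℕ} (hm : m ≠ 0)
    (i : ℤ) : Relation.TransGen r i (i + m * c) := by
  induction m, Nat.one_le_iff_ne_zero.mpr hm using Nat.le_induction with
  | base => simpa using .single (h i)
  | succ m hm ih =>
    rw [Nat.cast_succ, add_one_mul, ← add_assoc]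
    exact (ih (by omega)).tail (h _)

theorem IsAngularLift.reaches_liftedDisc (hF : IsAngularLift I z' F) {z : ℂ} (hz : z ∈ U)
    {n : ℕ} (hn : n ≠ 0) (hr : f^[n] z ∈ U) {j : ℤ}
    (hj : (F 1)^[n] (l z) = l (f^[n] z) + j * turn) (p i : ℤ) :
    Reaches (shiftedLift F p) (liftedDisc U l i) (liftedDisc U l (i + (j - n * p))) := by
  refine ⟨n, hn, _, mem_image_of_mem _ hz, f^[n] z, hr, ?_⟩
  rw [hF.iterate_shiftedLift, hF.iterate_add_turn, hj]
  push_cast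
  ring

/-- Otherwise translates of the two orbit segments close up to a chain of lifted discs for
`shiftedLift F p`. -/
theorem FreeDisc.le_mul_of_return_of_return (hU : FreeDisc f U) (hz' : z' ∈ FixPts f)
    (hl : IsLogOn U z' l) (hF : IsAngularLift I z' F) {p : ℤ} (hp : ∀ w, shiftedLift F p w ≠ w)
    {x y : ℂ} (hx : x ∈ U) (hy : y ∈ U) {m n : ℕ} (hm : m ≠ 0) (hn : n ≠ 0)
    (hmU : f^[m] x ∈ U) (hnU : f^[n] y ∈ U) {i j : ℤ}
    (hi : (F 1)^[m] (l x) = l (f^[m] x) + i * turn) (hj : (F 1)^[n] (l y) = l (f^[n] y) + j * turn)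
    (hi_lt : i < m * p) : j ≤ n * p := by
  by_contra! hj_gt
  have up := hF.reaches_liftedDisc hy hn hnU hj p
  have down := hF.reaches_liftedDisc hx hm hmU hi p
  obtain ⟨a, ha⟩ := Int.eq_ofNat_of_zero_le (show 0 ≤ j - n * p by omega)
  obtain ⟨b, hb⟩ := Int.eq_ofNat_of_zero_le (show 0 ≤ m * p - i by omega)
  have up_chain := transGen_add_mul
    (r := fun i k => Reaches (shiftedLift F p) (liftedDisc U l i) (liftedDisc U l k))
    up (m := b) (by omega) 0
  have down_chain := transGen_add_mul
    (r := fun i k => Reaches (shiftedLift F p) (liftedDisc U l i) (liftedDisc U l k))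
    down (m := a) (by omega) (0 + b * (j - n * p))
  have closed : 0 + b * (j - n * p) + a * (i - m * p) = 0 := by
    rw [ha, ← neg_sub, hb]
    ring
  rw [closed] at down_chain
  exact (hU.isFreeFamily_liftedDisc hz' hl hF p).not_transGen_reaches
    (hF.isotopicToId_shiftedLift p) hp 0 (up_chain.trans down_chain)

end LiftedDisc

/-! ### Bounds uniform in the fixed point -/

theorem angVar_sub_angVar_eq {p q : ℝ → ℂ} (hp : ContinuousOn p (Icc 0 1))
    (hq : ContinuousOn q (Icc 0 1)) {c : ℂ}
    (h : ∀ t ∈ Icc (0 : ℝ) 1, p t / (c * q t) ∈ Complex.slitPlane) :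
    angVar p - angVar q
      = turns (Complex.log (p 1 / (c * q 1))) - turns (Complex.log (p 0 / (c * q 0))) := by
  have denom_ne (t : ℝ) (ht : t ∈ Icc (0 : ℝ) 1) : c * q t ≠ 0 := fun h₀ =>
    Complex.slitPlane_ne_zero (h t ht) (by rw [h₀, div_zero])
  have : ContractibleSpace (Icc (0 : ℝ) 1) :=
    (convex_Icc 0 1).contractibleSpace (nonempty_Icc.mpr zero_le_one)
  obtain ⟨L, L_cont, exp_L⟩ := exists_continuousOn_log hq fun t ht => right_ne_zero_of_mul
    (denom_ne t ht)
  have log_cont : ContinuousOn (fun t => Complex.log (p t / (c * q t))) (Icc 0 1) :=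
    (hp.div (continuousOn_const.mul hq) denom_ne).clog h
  have exp_log_p (t : ℝ) (ht : t ∈ Icc (0 : ℝ) 1) :
      Complex.exp (L t + Complex.log c + Complex.log (p t / (c * q t))) = p t := by
    rw [Complex.exp_add, Complex.exp_add, exp_L t ht,
      Complex.exp_log (left_ne_zero_of_mul (denom_ne t ht)),
      Complex.exp_log (Complex.slitPlane_ne_zero (h t ht)), mul_comm (q t),
      mul_div_cancel₀ _ (denom_ne t ht)]
  rw [angVar_eq_turns_sub L_cont exp_L,
    angVar_eq_turns_sub ((L_cont.add continuousOn_const).add log_cont) exp_log_p]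
  simp only [Pi.add_apply, turns_add]
  ring

theorem abs_turns_log_le (z : ℂ) : |turns (Complex.log z)| ≤ 1 / 2 := by
  rw [turns, Complex.log_im, abs_div, abs_of_pos Real.two_pi_pos, div_le_iff₀ Real.two_pi_pos]
  linarith [Complex.abs_arg_le_pi z]

theorem abs_angVar_sub_le_one {a q : ℝ → ℂ} (ha : ContinuousOn a (Icc 0 1))
    (hq : ContinuousOn q (Icc 0 1)) (h : ∀ t ∈ Icc (0 : ℝ) 1, ‖a t‖ < ‖q t‖) :
    |angVar (fun t => a t - q t) - angVar q| ≤ 1 := by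
  have ratio_mem (t : ℝ) (ht : t ∈ Icc (0 : ℝ) 1) :
      (a t - q t) / (-1 * q t) ∈ Complex.slitPlane := by
    have q_pos := (norm_nonneg _).trans_lt (h t ht)
    have ratio_eq : (a t - q t) / (-1 * q t) = 1 + -(a t / q t) := by
      have := norm_pos_iff.mp q_pos
      field_simp
      ring
    rw [ratio_eq]
    exact Complex.mem_slitPlane_of_norm_lt_one
      (by rw [norm_neg, norm_div, div_lt_one q_pos]; exact h t ht)
  rw [angVar_sub_angVar_eq (p := fun t => a t - q t) (ha.sub hq) hq ratio_mem]
  refine (abs_sub _ _).trans ?_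
  linarith [abs_turns_log_le ((a 1 - q 1) / (-1 * q 1)),
    abs_turns_log_le ((a 0 - q 0) / (-1 * q 0))]

theorem continuousAt_angVar {Y : Type*} [TopologicalSpace Y] {H : ℝ → Y → ℂ}
    (hH : Continuous fun p : ℝ × Y => H p.1 p.2) {y₀ : Y} (h : ∀ t ∈ Icc (0 : ℝ) 1, H t y₀ ≠ 0) :
    ContinuousAt (fun y => angVar fun t => H t y) y₀ := by
  have ratio_cont (t : ℝ) (ht : t ∈ Icc (0 : ℝ) 1) :
      ContinuousAt (fun p : Y × ℝ => H p.2 p.1 / (1 * H p.2 y₀)) (y₀, t) := by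
    refine ContinuousAt.div (by fun_prop) (by fun_prop) ?_
    rw [one_mul]
    exact h t ht
  have ratio_mem : ∀ᶠ y in 𝓝 y₀, ∀ t ∈ Icc (0 : ℝ) 1,
      H t y / (1 * H t y₀) ∈ Complex.slitPlane := by
    refine isCompact_Icc.eventually_forall_of_forall_eventually fun t ht =>
      (ratio_cont t ht).eventually_mem (Complex.isOpen_slitPlane.mem_nhds ?_)
    simp [h t ht]
  have log_cont (t : ℝ) (ht : t ∈ Icc (0 : ℝ) 1) :
      ContinuousAt (fun y => turns (Complex.log (H t y / (1 * H t y₀)))) y₀ := by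
    refine continuous_turns.continuousAt.comp (ContinuousAt.clog ?_ (by simp [h t ht]))
    exact ContinuousAt.div (by fun_prop) (by fun_prop) (by simpa using h t ht)
  refine ContinuousAt.congr (f := fun y => turns (Complex.log (H 1 y / (1 * H 1 y₀)))
      - turns (Complex.log (H 0 y / (1 * H 0 y₀))) + angVar fun t => H t y₀) ?_ ?_
  · exact ((log_cont 1 (by simp)).sub (log_cont 0 (by simp))).add continuousAt_const
  · filter_upwards [ratio_mem] with y hy
    rw [← angVar_sub_angVar_eq (by fun_prop) (by fun_prop) hy, sub_add_cancel]

section ProperFamily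

variable {Y : Type*} [TopologicalSpace Y] {J : ℝ → Y → ℂ}
  (hJ : Continuous fun p : ℝ × Y => J p.1 p.2)
  (hJ_proper : ∀ C : ℝ, ∃ K, IsCompact K ∧ ∀ y ∉ K, ∀ t ∈ Icc (0 : ℝ) 1, C < ‖J t y‖)
include hJ hJ_proper

theorem exists_isCompact_forall_abs_angVar_sub_angVar_le {a : ℝ → ℂ} (ha : Continuous a) :
    ∃ K, IsCompact K ∧ ∀ y ∉ K,
      |angVar (fun t => a t - J t y) - angVar fun t => J t y| ≤ 1 := by
  obtain ⟨C, hC⟩ := (isCompact_Icc (a := (0 : ℝ)) (b := 1)).exists_bound_of_continuousOn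
    ha.continuousOn
  obtain ⟨K, hK, J_large⟩ := hJ_proper C
  exact ⟨K, hK, fun y hy => abs_angVar_sub_le_one ha.continuousOn (q := fun t => J t y)
    (by fun_prop) fun t ht => (hC t ht).trans_lt (J_large y hy t ht)⟩

theorem exists_forall_abs_angVar_sub_le {S K : Set Y} (hS : IsClosed S) (hK : IsCompact K) {B : ℝ}
    (hB : ∀ y ∈ S \ K, |angVar fun t => J t y| ≤ B) {a : ℝ → ℂ} (ha : Continuous a)
    (hne : ∀ y ∈ S, ∀ t ∈ Icc (0 : ℝ) 1, a t ≠ J t y) :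
    ∃ A : ℝ, ∀ y ∈ S, |angVar fun t => a t - J t y| ≤ A := by
  obtain ⟨K', hK', close⟩ := exists_isCompact_forall_abs_angVar_sub_angVar_le hJ hJ_proper ha
  have angVar_cont : ContinuousOn (fun y => angVar fun t => a t - J t y) (S ∩ (K ∪ K')) :=
    fun y hy => (continuousAt_angVar (H := fun t y => a t - J t y) (by fun_prop) fun t ht =>
      sub_ne_zero.mpr (hne y hy.1 t ht)).continuousWithinAt
  obtain ⟨A, hA⟩ := ((hK.union hK').inter_left hS).exists_bound_of_continuousOn angVar_cont
  refine ⟨max A (B + 1), fun y hy => ?_⟩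
  by_cases hyK : y ∈ K ∪ K'
  · exact (hA y ⟨hy, hyK⟩).trans (le_max_left _ _)
  · rw [mem_union, not_or] at hyK
    have := abs_sub_abs_le_abs_sub (angVar fun t => a t - J t y) (angVar fun t => J t y)
    exact le_max_of_le_right (by linarith [hB y ⟨hy, hyK.1⟩, close y hyK.2])

end ProperFamily

theorem HIsotopy.exists_isCompact_forall_lt_norm {E : Type*} [NormedAddCommGroup E] [ProperSpace E]
    {f : E ≃ₜ E} (I : HIsotopy f) (C : ℝ) :
    ∃ K, IsCompact K ∧ ∀ z ∉ K, ∀ t ∈ Icc (0 : ℝ) 1, C < ‖I.F t z‖ := by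
  refine ⟨(fun p : ℝ × E => (I.F p.1).symm p.2) '' (Icc 0 1 ×ˢ closedBall 0 C),
    (isCompact_Icc.prod (isCompact_closedBall 0 C)).image I.cont_symm, fun z hz t ht => ?_⟩
  by_contra! h
  exact hz ⟨(t, I.F t z), ⟨ht, mem_closedBall_zero_iff.mpr h⟩, (I.F t).symm_apply_apply z⟩

theorem angVar_const {c : ℂ} (hc : c ≠ 0) : (angVar fun _ => c) = 0 := by
  rw [angVar_eq_turns_sub continuousOn_const fun _ _ => Complex.exp_log hc, sub_self]

section Bounds

variable {f : ℂ ≃ₜ ℂ} {I : HIsotopy f} {U : Set ℂ}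

theorem isClosed_fixPts {X : Type*} [TopologicalSpace X] [T2Space X] {g : X → X}
    (hg : Continuous g) : IsClosed (FixPts g) :=
  isClosed_eq hg continuous_id

/-- Far away, the turning of a fixed point is its linking number with any given fixed point, up to
one turn. -/
theorem P1.exists_isCompact_forall_abs_tourne_le (hP1 : P1 I) :
    ∃ K, IsCompact K ∧ ∃ B : ℝ, ∀ z' ∈ FixPts f \ K, |Tourne I z'| ≤ B := by
  obtain ⟨M, hM⟩ := hP1
  rcases (FixPts f).eq_empty_or_nonempty with h | ⟨z, hz⟩
  · exact ⟨∅, isCompact_empty, 0, fun z' hz' => absurd hz'.1 (h ▸ notMem_empty z')⟩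
  have I_cont := I.cont
  obtain ⟨K, hK, close⟩ := exists_isCompact_forall_abs_angVar_sub_angVar_le I_cont
    I.exists_isCompact_forall_lt_norm (a := fun t => I.F t z) (by fun_prop)
  refine ⟨insert z K, hK.insert z, M + 1, fun z' ⟨hz', hz'K⟩ => ?_⟩
  rw [mem_insert_iff, not_or] at hz'K
  have enlace_le := hM z hz z' hz' (Ne.symm hz'K.1)
  have tourne_close : |Enlace I z z' - Tourne I z'| ≤ 1 := close z' hz'K.2
  rw [abs_sub_comm] at tourne_close
  linarith [abs_sub_abs_le_abs_sub (Tourne I z') (Enlace I z z')]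

theorem P1.exists_forall_abs_enlace_le (hP1 : P1 I) {z : ℂ} (hz : z ∉ FixPts f) :
    ∃ A : ℝ, ∀ z' ∈ FixPts f, |Enlace I z z'| ≤ A := by
  obtain ⟨K, hK, B, tourne_le⟩ := hP1.exists_isCompact_forall_abs_tourne_le
  have I_cont := I.cont
  refine exists_forall_abs_angVar_sub_le I_cont I.exists_isCompact_forall_lt_norm
    (isClosed_fixPts f.continuous) hK tourne_le (a := fun t => I.F t z)
    (by fun_prop) fun z' hz' t _ h => ?_
  exact hz ((I.F t).injective h ▸ hz')

theorem exists_forall_abs_angVar_sub_const_le {S : Set ℂ} (hS : IsClosed S) {γ : ℝ → ℂ}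
    (hγ : Continuous γ) (hγS : ∀ t ∈ Icc (0 : ℝ) 1, γ t ∉ S) :
    ∃ A : ℝ, ∀ z' ∈ S, |angVar fun t => γ t - z'| ≤ A := by
  refine exists_forall_abs_angVar_sub_le (J := fun _ z' => z') continuous_snd
    (fun C => ⟨closedBall 0 C, isCompact_closedBall 0 C, fun z' hz' _ _ => by simpa using hz'⟩)
    hS isCompact_singleton (K := {0}) (B := 0) (fun z' hz' => ?_) hγ
    fun z' hz' t ht h => hγS t ht (h ▸ hz')
  rw [angVar_const hz'.2, abs_zero]

namespace FreeDisc

theorem iterate_notMem_fixPts (hU : FreeDisc f U) {z : ℂ} (hz : z ∈ U) (n : ℕ) :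
    f^[n] z ∉ FixPts f := fun h => by
  have fixed : f^[n] (f z) = f^[n] z := by
    rwa [← Function.iterate_succ_apply, Function.iterate_succ_apply']
  exact hU.notMem_of_mem_fixPts (f.injective.iterate n fixed) hz

theorem exists_forall_abs_alphaU_le (hU : FreeDisc f U) (hP1 : P1 I) {z : ℂ} (hz : z ∈ U) :
    ∃ A : ℝ, ∀ z' ∈ FixPts f, |alphaU I U z' z| ≤ A := by
  choose A hA using fun r => hP1.exists_forall_abs_enlace_le (hU.iterate_notMem_fixPts hz r)
  obtain ⟨γ, γ_cont, hγ⟩ := hU.exists_isPathIn (iterate_retTime_mem (f := f) hz) hz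
  obtain ⟨B, hB⟩ := exists_forall_abs_angVar_sub_const_le (isClosed_fixPts f.continuous) γ_cont
    fun t ht h => hU.notMem_of_mem_fixPts h (hγ.2.1 t ht)
  refine ⟨∑ r ∈ Finset.range (retTime f U z), A r + B, fun z' hz' => ?_⟩
  rw [hU.alphaU_eq_add_angVar hz' hz hγ]
  refine (abs_add_le _ _).trans (add_le_add ?_ (hB z' hz'))
  exact (Finset.abs_sum_le_sum_abs _ _).trans (Finset.sum_le_sum fun r _ => hA r z' hz')

theorem alphaU_eq_zero (hU : FreeDisc f U) {z' : ℂ} (hz' : z' ∈ FixPts f) {z : ℂ} (hz : z ∈ U)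
    (h : retTime f U z = 0) : alphaU I U z' z = 0 := by
  obtain ⟨l, hl⟩ := hU.exists_isLogOn hz'
  simp [hU.alphaU_eq hl hz, h]

/-- Comparison of the return of `z` with one fixed return, that of `z₀`. -/
theorem abs_alphaU_le_mul_retTime (hU : FreeDisc f U) {z' : ℂ} (hz' : z' ∈ FixPts f) {P : ℕ}
    (hP : ∀ z ∈ FixPts f, z ≠ z' → |Enlace I z z'| < P) {z₀ z : ℂ} (hz₀ : z₀ ∈ U)
    (h₀ : retTime f U z₀ ≠ 0) (hα : |alphaU I U z' z₀| < P) (hz : z ∈ U) :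
    |alphaU I U z' z| ≤ P * retTime f U z := by
  rcases eq_or_ne (retTime f U z) 0 with h | h
  · simp [hU.alphaU_eq_zero hz' hz h, h]
  obtain ⟨F, hF⟩ := exists_isAngularLift I z'
  obtain ⟨l, hl⟩ := hU.exists_isLogOn hz'
  have hr₀ := iterate_retTime_mem (f := f) hz₀
  have hr := iterate_retTime_mem (f := f) hz
  obtain ⟨i, hi⟩ := hl.exists_iterate_eq hF hz' hz₀ hr₀
  obtain ⟨j, hj⟩ := hl.exists_iterate_eq hF hz' hz hr
  rw [hU.alphaU_eq_of_iterate hl hF hz' hz₀ hi, abs_lt] at hα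
  rw [hU.alphaU_eq_of_iterate hl hF hz' hz hj]
  have no_fix (p : ℤ) (hp : |(p : ℝ)| = P) : ∀ w, shiftedLift F p w ≠ w :=
    hF.shiftedLift_ne hz' fun y hy hyz' => hp ▸ hP y hy hyz'
  norm_cast at hα ⊢
  have P_le : (P : ℤ) ≤ retTime f U z₀ * P := by
    exact_mod_cast Nat.le_mul_of_pos_left P (Nat.pos_of_ne_zero h₀)
  rw [abs_le]
  constructor
  · by_contra! hj_lt
    have := hU.le_mul_of_return_of_return hz' hl hF (p := -P) (no_fix _ (by simp)) hz hz₀ h h₀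
      hr hr₀ hj hi (by rw [mul_neg, mul_comm]; exact_mod_cast hj_lt)
    rw [mul_neg] at this
    omega
  · rw [Nat.cast_mul, mul_comm]
    exact hU.le_mul_of_return_of_return hz' hl hF (no_fix P (by simp)) hz₀ hz h₀ h
      hr₀ hr hi hj (by omega)

theorem exists_forall_abs_alphaU_le_mul_retTime (hU : FreeDisc f U) (hP1 : P1 I) :
    ∃ P : ℕ, ∀ z' ∈ FixPts f, ∀ z ∈ U, |alphaU I U z' z| ≤ P * retTime f U z := by
  by_cases h : ∀ z ∈ U, retTime f U z = 0
  · exact ⟨0, fun z' hz' z hz => by simp [hU.alphaU_eq_zero hz' hz (h z hz)]⟩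
  push Not at h
  obtain ⟨z₀, hz₀, h₀⟩ := h
  obtain ⟨A, hA⟩ := hU.exists_forall_abs_alphaU_le hP1 hz₀
  obtain ⟨M, hM⟩ := hP1
  obtain ⟨P, hP⟩ := exists_nat_gt (max M A)
  rw [max_lt_iff] at hP
  exact ⟨P, fun z' hz' z hz => hU.abs_alphaU_le_mul_retTime hz'
    (fun y hy hyz' => (hM y hy z' hz' hyz').trans_lt hP.1) hz₀ h₀ ((hA z' hz').trans_lt hP.2) hz⟩

end FreeDisc

end Bounds

/-! ### Kac's inequality and integrability of `alphaHat` -/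

section ReturnTime

variable {f : ℂ ≃ₜ ℂ} {U : Set ℂ} {z : ℂ}

theorem retTime_eq_iff {n : ℕ} (hn : n ≠ 0) :
    retTime f U z = n ↔ f^[n] z ∈ U ∧ ∀ k ∈ Ioo 0 n, f^[k] z ∉ U := by
  constructor
  · rintro rfl
    have returns : {n : ℕ | 0 < n ∧ f^[n] z ∈ U}.Nonempty :=
      Nat.nonempty_of_pos_sInf (Nat.pos_of_ne_zero hn)
    exact ⟨(Nat.sInf_mem returns).2, fun k ⟨k_pos, hk⟩ hkU => Nat.notMem_of_lt_sInf hk ⟨k_pos, hkU⟩⟩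
  · rintro ⟨hnU, first⟩
    have is_return : n ∈ {n : ℕ | 0 < n ∧ f^[n] z ∈ U} := ⟨Nat.pos_of_ne_zero hn, hnU⟩
    refine le_antisymm (Nat.sInf_le is_return) (le_csInf ⟨n, is_return⟩ fun k ⟨k_pos, hkU⟩ => ?_)
    exact not_lt.mp fun hkn => first k ⟨k_pos, hkn⟩ hkU

theorem retTime_eq_zero_iff : retTime f U z = 0 ↔ ∀ k > 0, f^[k] z ∉ U := by
  simp [retTime, eq_empty_iff_forall_notMem]

theorem retTime_le {k : ℕ} (hk : 0 < k) (hkU : f^[k] z ∈ U) : retTime f U z ≤ k :=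
  Nat.sInf_le ⟨hk, hkU⟩

theorem retTime_pos {k : ℕ} (hk : 0 < k) (hkU : f^[k] z ∈ U) : 0 < retTime f U z :=
  Nat.pos_of_ne_zero fun h => retTime_eq_zero_iff.mp h k hk hkU

theorem measurable_retTime (f : ℂ ≃ₜ ℂ) (hU : MeasurableSet U) : Measurable (retTime f U) := by
  have visit (k : ℕ) : MeasurableSet (f^[k] ⁻¹' U) := (f.continuous.iterate k).measurable hU
  refine measurable_to_countable' fun n => ?_
  rcases eq_or_ne n 0 with rfl | hn
  · have : retTime f U ⁻¹' {0} = ⋂ k > 0, (f^[k] ⁻¹' U)ᶜ := by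
      ext z
      simp [retTime_eq_zero_iff]
    rw [this]
    exact .biInter (to_countable _) fun k _ => (visit k).compl
  · have : retTime f U ⁻¹' {n} = f^[n] ⁻¹' U ∩ ⋂ k ∈ Ioo 0 n, (f^[k] ⁻¹' U)ᶜ := by
      ext z
      simp [retTime_eq_iff hn]
    rw [this]
    exact (visit n).inter (.biInter (to_countable _) fun k _ => (visit k).compl)

/-- The points on the `n`-th floor of the tower of returns to `U`: points at time `n` of an
excursion of length greater than `n`. -/
def towerFloor (f : ℂ ≃ₜ ℂ) (U : Set ℂ) (n : ℕ) : Set ℂ :=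
  f.symm^[n] ⁻¹' (U ∩ {z | n < retTime f U z})

theorem disjoint_towerFloor_of_lt {m n : ℕ} (hmn : m < n) :
    Disjoint (towerFloor f U m) (towerFloor f U n) := by
  rw [Set.disjoint_left]
  rintro x ⟨visit, -⟩ ⟨-, long⟩
  have advance : f^[n - m] (f.symm^[n] x) = f.symm^[m] x := by
    rw [← Nat.sub_add_cancel hmn.le, Nat.add_sub_cancel, Function.iterate_add_apply]
    exact Function.LeftInverse.iterate f.apply_symm_apply (n - m) _
  have short := retTime_le (Nat.sub_pos_of_lt hmn) (advance ▸ visit)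
  exact absurd (long.trans_le short) (by omega)

theorem setLIntegral_natCast_eq_tsum {X : Type*} [MeasurableSpace X] {μ : Measure X} {S : Set X}
    {τ : X → ℕ} (hτ : Measurable τ) :
    ∫⁻ x in S, (τ x : ENNReal) ∂μ = ∑' n, μ (S ∩ {x | n < τ x}) := by
  have level_meas (n : ℕ) : MeasurableSet {x | n < τ x} := measurableSet_lt measurable_const hτ
  have layers (x : X) : (τ x : ENNReal) = ∑' n : ℕ, {x | n < τ x}.indicator 1 x := by
    rw [tsum_eq_sum (s := Finset.range (τ x)) fun n hn => indicator_of_notMem (by simpa using hn) _,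
      Finset.sum_congr rfl fun n hn => indicator_of_mem (by simpa using hn) _]
    simp
  simp only [layers]
  rw [lintegral_tsum fun n => (measurable_one.indicator (level_meas n)).aemeasurable]
  refine tsum_congr fun n => ?_
  rw [lintegral_indicator_one (level_meas n), Measure.restrict_apply (level_meas n), inter_comm]

theorem setLIntegral_retTime_le {ν : Measure ℂ} (hf : MeasurePreserving f ν ν)
    (hU : MeasurableSet U) : ∫⁻ z in U, (retTime f U z : ENNReal) ∂ν ≤ ν univ := by
  have τ_meas := measurable_retTime f hU
  have symm_pres : MeasurePreserving f.symm ν ν :=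
    MeasurePreserving.symm f.toMeasurableEquiv hf
  have base_meas (n : ℕ) : MeasurableSet (U ∩ {z | n < retTime f U z}) :=
    hU.inter (measurableSet_lt measurable_const τ_meas)
  have measure_towerFloor (n : ℕ) : ν (towerFloor f U n) = ν (U ∩ {z | n < retTime f U z}) :=
    (symm_pres.iterate n).measure_preimage (base_meas n).nullMeasurableSet
  rw [setLIntegral_natCast_eq_tsum τ_meas]
  simp only [← measure_towerFloor]
  refine tsum_measure_le_measure_univ
    (fun n => ((symm_pres.iterate n).measurable (base_meas n)).nullMeasurableSet) fun m n hmn => ?_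
  rcases hmn.lt_or_gt with h | h
  · exact (disjoint_towerFloor_of_lt h).aedisjoint
  · exact (disjoint_towerFloor_of_lt h).symm.aedisjoint

end ReturnTime

section AlphaHat

variable {f : ℂ ≃ₜ ℂ} {I : HIsotopy f} {U : Set ℂ} {z' : ℂ}

theorem continuousAt_enlace {z : ℂ} (hzz' : z ≠ z') : ContinuousAt (Enlace I · z') z := by
  have I_cont := I.cont
  exact continuousAt_angVar (H := fun t z => I.F t z - I.F t z') (by fun_prop) fun t _ =>
    sub_ne_zero.mpr ((I.F t).injective.ne hzz')

theorem FreeDisc.continuousAt_birkhoffSum_enlace (hU : FreeDisc f U) (hz' : z' ∈ FixPts f) {z : ℂ}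
    (hz : z ∈ U) (n : ℕ) : ContinuousAt (birkhoffSum f (Enlace I · z') n) z := by
  refine tendsto_finsetSum _ fun r _ => ?_
  have iterate_ne : f^[r] z ≠ z' := fun h => hU.iterate_notMem_fixPts hz r (h ▸ hz')
  exact (continuousAt_enlace iterate_ne).comp (f.continuous.iterate r).continuousAt

theorem FreeDisc.continuousOn_alphaU (hU : FreeDisc f U) (hz' : z' ∈ FixPts f) (n : ℕ) :
    ContinuousOn (alphaU I U z') (U ∩ retTime f U ⁻¹' {n}) := by
  obtain ⟨l, hl⟩ := hU.exists_isLogOn hz'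
  have return_mem : MapsTo f^[n] (U ∩ retTime f U ⁻¹' {n}) U := fun z ⟨hz, hn⟩ =>
    hn ▸ iterate_retTime_mem hz
  have log_return_cont : ContinuousOn (fun z => l (f^[n] z)) (U ∩ retTime f U ⁻¹' {n}) :=
    hl.continuousOn.comp (f.continuous.iterate n).continuousOn return_mem
  have sum_cont : ContinuousOn (birkhoffSum f (Enlace I · z') n) U := fun z hz =>
    (hU.continuousAt_birkhoffSum_enlace hz' hz n).continuousWithinAt
  refine ((sum_cont.mono inter_subset_left).add ((continuous_turns.comp_continuousOn
    (hl.continuousOn.mono inter_subset_left)).sub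
    (continuous_turns.comp_continuousOn log_return_cont))).congr fun z ⟨hz, hn⟩ => ?_
  rw [hU.alphaU_eq hl hz, show retTime f U z = n from hn]
  rfl

theorem alphaHat_nonneg (R : ℝ) (z : ℂ) : 0 ≤ alphaHat I U R z := by
  refine Real.sSup_nonneg ?_
  rintro _ ⟨z', -, -, rfl⟩
  exact abs_nonneg _

theorem alphaHat_eq_iSup (R : ℝ) (z : ℂ) :
    alphaHat I U R z = ⨆ z' : {z' : ℂ // z' ∈ FixPts f ∧ R ≤ ‖z'‖}, |alphaU I U z' z| := by
  rw [alphaHat, iSup]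
  congr 1
  ext a
  simp [and_assoc, eq_comm]

section UniformBound

variable {P : ℕ} (hP : ∀ z' ∈ FixPts f, ∀ z ∈ U, |alphaU I U z' z| ≤ P * retTime f U z)
include hP

theorem bddAbove_range_abs_alphaU (R : ℝ) {z : ℂ} (hz : z ∈ U) :
    BddAbove (range fun z' : {z' : ℂ // z' ∈ FixPts f ∧ R ≤ ‖z'‖} => |alphaU I U z' z|) :=
  ⟨P * retTime f U z, by
    rintro _ ⟨z', rfl⟩
    exact hP z' z'.2.1 z hz⟩

theorem alphaHat_le (R : ℝ) {z : ℂ} (hz : z ∈ U) : alphaHat I U R z ≤ P * retTime f U z := by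
  rw [alphaHat_eq_iSup]
  exact Real.iSup_le (fun z' => hP z' z'.2.1 z hz) (by positivity)

theorem abs_alphaU_le_alphaHat {R : ℝ} {z : ℂ} (hz : z ∈ U) (hz' : z' ∈ FixPts f) (hR : R ≤ ‖z'‖) :
    |alphaU I U z' z| ≤ alphaHat I U R z := by
  rw [alphaHat_eq_iSup]
  exact le_ciSup (bddAbove_range_abs_alphaU hP R hz) ⟨z', hz', hR⟩

theorem FreeDisc.lowerSemicontinuousOn_alphaHat (hU : FreeDisc f U) (R : ℝ) (n : ℕ) :
    LowerSemicontinuousOn (alphaHat I U R) (U ∩ retTime f U ⁻¹' {n}) := by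
  rw [funext (alphaHat_eq_iSup R)]
  exact lowerSemicontinuousOn_ciSup (fun z hz => bddAbove_range_abs_alphaU hP R hz.1) fun z' =>
    (hU.continuousOn_alphaU z'.2.1 n).abs.lowerSemicontinuousOn

theorem FreeDisc.aemeasurable_alphaHat (hU : FreeDisc f U) (R : ℝ) (ν : Measure ℂ) :
    AEMeasurable (alphaHat I U R) (ν.restrict U) := by
  have U_eq : U = ⋃ n, U ∩ retTime f U ⁻¹' {n} := by
    rw [← inter_iUnion, ← preimage_iUnion, iUnion_of_singleton, preimage_univ, inter_univ]
  rw [U_eq, aemeasurable_iUnion_iff, ← U_eq]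
  intro n
  refine aemeasurable_restrict_of_measurable_subtype (hU.1.measurableSet.inter
    (measurable_retTime f hU.1.measurableSet (measurableSet_singleton n))) ?_
  exact (lowerSemicontinuous_restrict_iff.mpr
    (hU.lowerSemicontinuousOn_alphaHat hP R n)).measurable

theorem FreeDisc.integrableOn_alphaHat (hU : FreeDisc f U) (R : ℝ) {ν : Measure ℂ}
    [IsFiniteMeasure ν] (hf : MeasurePreserving f ν ν) : IntegrableOn (alphaHat I U R) U ν := by
  refine ⟨(hU.aemeasurable_alphaHat hP R ν).aestronglyMeasurable, ?_⟩
  rw [hasFiniteIntegral_iff_ofReal (ae_of_all _ (alphaHat_nonneg R))]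
  calc ∫⁻ z in U, ENNReal.ofReal (alphaHat I U R z) ∂ν
      ≤ ∫⁻ z in U, (P : ENNReal) * (retTime f U z : ENNReal) ∂ν :=
        setLIntegral_mono' hU.1.measurableSet fun z hz =>
          ENNReal.ofReal_le_of_le_toReal (by simpa using alphaHat_le hP R hz)
    _ = P * ∫⁻ z in U, (retTime f U z : ENNReal) ∂ν := by
        rw [lintegral_const_mul' _ _ (ENNReal.natCast_ne_top P)]
    _ ≤ P * ν univ := by gcongr; exact setLIntegral_retTime_le hf hU.1.measurableSet
    _ < ⊤ := ENNReal.mul_lt_top (ENNReal.natCast_lt_top P) (measure_lt_top ν _)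

end UniformBound

end AlphaHat

/-! ### A maximal ergodic inequality -/

section MaximalErgodic

variable {X : Type*} {T : X → X} {φ : X → ℝ}

theorem birkhoffSum_nonneg (hφ : 0 ≤ φ) (n : ℕ) (x : X) : 0 ≤ birkhoffSum T φ n x :=
  Finset.sum_nonneg fun _ _ => hφ _

theorem le_birkhoffSum (hφ : 0 ≤ φ) {n : ℕ} (hn : 0 < n) (x : X) : φ x ≤ birkhoffSum T φ n x :=
  Finset.single_le_sum (f := fun r => φ (T^[r] x)) (fun _ _ => hφ _) (Finset.mem_range.mpr hn)

theorem birkhoffSum_le_birkhoffSum_add (hφ : 0 ≤ φ) (m n : ℕ) (x : X) :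
    birkhoffSum T φ n (T^[m] x) ≤ birkhoffSum T φ (m + n) x := by
  rw [birkhoffSum_add]
  exact le_add_of_nonneg_left (birkhoffSum_nonneg hφ m x)

theorem birkhoffSum_le_nsmul {h : X → ℝ} (hh : h ∘ T ≤ h) (n : ℕ) (x : X) :
    birkhoffSum T h n x ≤ n • h x := by
  have iterate_le (r : ℕ) : h (T^[r] x) ≤ h x := by
    induction r with
    | zero => exact le_rfl
    | succ r ih =>
      rw [Function.iterate_succ_apply']
      exact (hh _).trans ih
  simpa [birkhoffSum] using Finset.sum_le_sum fun r (_ : r ∈ Finset.range n) => iterate_le r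

theorem partialSups_birkhoffSum_nonneg (n : ℕ) : 0 ≤ partialSups (birkhoffSum T φ) n := by
  simpa using le_partialSups_of_le (birkhoffSum T φ) (Nat.zero_le n)

theorem partialSups_birkhoffSum_le (n : ℕ) (x : X) :
    partialSups (birkhoffSum T φ) n x
      ≤ max 0 (φ x + partialSups (birkhoffSum T φ) n (T x)) := by
  rw [Pi.partialSups_apply]
  refine partialSups_le _ n _ fun j hj => ?_
  cases j with
  | zero => simp
  | succ j =>
    refine le_max_of_le_right ?_
    rw [birkhoffSum_succ']
    gcongr
    exact le_partialSups_of_le (birkhoffSum T φ) (Nat.le_of_succ_le hj) (T x)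

/-- The upper limit of the Birkhoff averages of `φ`; only meant for `φ ≥ 0`, as negative averages
are replaced by `0`. -/
def upperBirkhoffAverage (T : X → X) (φ : X → ℝ) (x : X) : ENNReal :=
  limsup (fun n => ENNReal.ofReal (birkhoffAverage ℝ T φ n x)) atTop

theorem birkhoffAverage_apply_le (hφ : 0 ≤ φ) (n : ℕ) (x : X) :
    birkhoffAverage ℝ T φ n (T x) ≤ (1 + 1 / (n : ℝ)) * birkhoffAverage ℝ T φ (n + 1) x := by
  rcases eq_or_ne n 0 with rfl | hn
  · simpa using hφ x
  have sum_le := birkhoffSum_le_birkhoffSum_add (T := T) hφ 1 n x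
  rw [Function.iterate_one, add_comm] at sum_le
  have sum_le : birkhoffSum T φ n (T x) ≤ birkhoffSum T φ (n + 1) x := sum_le
  calc birkhoffAverage ℝ T φ n (T x)
      ≤ (n : ℝ)⁻¹ * birkhoffSum T φ (n + 1) x := mul_le_mul_of_nonneg_left sum_le (by positivity)
    _ = (1 + 1 / (n : ℝ)) * birkhoffAverage ℝ T φ (n + 1) x := by
        rw [birkhoffAverage, smul_eq_mul]
        push_cast
        field_simp

theorem upperBirkhoffAverage_apply_le (hφ : 0 ≤ φ) (x : X) :
    upperBirkhoffAverage T φ (T x) ≤ upperBirkhoffAverage T φ x := by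
  have factor_lim : limsup (fun n : ℕ => ENNReal.ofReal (1 + 1 / (n : ℝ))) atTop = 1 := by
    have := (tendsto_const_nhds (x := (1 : ℝ))).add tendsto_one_div_atTop_nhds_zero_nat
    simpa using (ENNReal.tendsto_ofReal this).limsup_eq
  calc upperBirkhoffAverage T φ (T x)
      ≤ limsup ((fun n : ℕ => ENNReal.ofReal (1 + 1 / (n : ℝ))) *
          fun n => ENNReal.ofReal (birkhoffAverage ℝ T φ (n + 1) x)) atTop := by
        refine limsup_le_limsup (.of_forall fun n => ?_)
        rw [Pi.mul_apply, ← ENNReal.ofReal_mul (by positivity)]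
        exact ENNReal.ofReal_le_ofReal (birkhoffAverage_apply_le hφ n x)
    _ ≤ 1 * limsup (fun n => ENNReal.ofReal (birkhoffAverage ℝ T φ (n + 1) x)) atTop := by
        have := ENNReal.limsup_mul_le' (f := atTop)
          (u := fun n : ℕ => ENNReal.ofReal (1 + 1 / (n : ℝ)))
          (v := fun n => ENNReal.ofReal (birkhoffAverage ℝ T φ (n + 1) x))
          (.inl (factor_lim ▸ one_ne_zero)) (.inl (factor_lim ▸ ENNReal.one_ne_top))
        rwa [factor_lim] at this
    _ = upperBirkhoffAverage T φ x := by
        rw [one_mul]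
        exact limsup_nat_add (fun n => ENNReal.ofReal (birkhoffAverage ℝ T φ n x)) 1

theorem exists_mul_lt_birkhoffSum_of_ofReal_lt {c : ℝ} {x : X}
    (h : ENNReal.ofReal c < upperBirkhoffAverage T φ x) : ∃ n : ℕ, n * c < birkhoffSum T φ n x := by
  obtain ⟨n, hn, n_pos⟩ :=
    ((frequently_lt_of_lt_limsup isCobounded_le_of_bot h).and_eventually
      (eventually_gt_atTop 0)).exists
  have lt_average := (ENNReal.ofReal_lt_ofReal_iff'.mp hn).1
  rw [birkhoffAverage, smul_eq_mul, lt_inv_mul_iff₀ (by positivity)] at lt_average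
  exact ⟨n, lt_average⟩

theorem ofReal_abs_le_upperBirkhoffAverage {ι : Type*} {F : Filter ι} [F.NeBot] {n : ι → ℕ}
    (hn : Tendsto n F atTop) {a : ι → ℝ} {ρ : ℝ}
    (ha : Tendsto (fun i => a i / n i) F (𝓝 ρ)) {C : ℝ} {x : X}
    (hle : ∀ᶠ i in F, |a i| ≤ birkhoffSum T φ (n i) x + C) :
    ENNReal.ofReal |ρ| ≤ upperBirkhoffAverage T φ x := by
  have error_lim : Tendsto (fun i => C / n i) F (𝓝 0) :=
    (tendsto_natCast_atTop_atTop.comp hn).const_div_atTop C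
  have lower_lim : Tendsto (fun i => ENNReal.ofReal (|a i / n i| - C / n i)) F
      (𝓝 (ENNReal.ofReal |ρ|)) := by
    simpa using ENNReal.tendsto_ofReal (ha.abs.sub error_lim)
  calc ENNReal.ofReal |ρ|
      = limsup (fun i => ENNReal.ofReal (|a i / n i| - C / n i)) F := lower_lim.limsup_eq.symm
    _ ≤ limsup (fun i => ENNReal.ofReal (birkhoffAverage ℝ T φ (n i) x)) F := by
        refine limsup_le_limsup (hle.mono fun i hi => ENNReal.ofReal_le_ofReal ?_)
        rw [abs_div, Nat.abs_cast, ← sub_div, birkhoffAverage, smul_eq_mul, inv_mul_eq_div]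
        exact div_le_div_of_nonneg_right (sub_le_iff_le_add.mpr hi) (Nat.cast_nonneg _)
    _ ≤ upperBirkhoffAverage T φ x :=
        hn.limsup_comp_le_limsup (u := fun n => ENNReal.ofReal (birkhoffAverage ℝ T φ n x))

section Integral

variable [MeasurableSpace X] {μ : Measure X}

theorem integrable_birkhoffSum (hT : MeasurePreserving T μ μ) (hφ : Integrable φ μ) (n : ℕ) :
    Integrable (birkhoffSum T φ n) μ :=
  integrable_finsetSum _ fun r _ => (hT.iterate r).integrable_comp_of_integrable hφ

theorem integrable_partialSups_birkhoffSum (hT : MeasurePreserving T μ μ) (hφ : Integrable φ μ)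
    (n : ℕ) : Integrable (partialSups (birkhoffSum T φ) n) μ := by
  induction n with
  | zero => simp
  | succ n ih =>
    rw [← Order.succ_eq_add_one, partialSups_succ]
    exact ih.sup (integrable_birkhoffSum hT hφ _)

theorem integral_indicator_partialSups_nonneg (hT : MeasurePreserving T μ μ)
    (hφ : Integrable φ μ) (n : ℕ) :
    0 ≤ ∫ x, {x | 0 < partialSups (birkhoffSum T φ) n x}.indicator φ x ∂μ := by
  set M := partialSups (birkhoffSum T φ) n
  have M_int : Integrable M μ := integrable_partialSups_birkhoffSum hT hφ n
  have MT_int : Integrable (fun x => M (T x)) μ := hT.integrable_comp_of_integrable M_int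
  have integral_MT : ∫ x, M (T x) ∂μ = ∫ x, M x ∂μ := by
    rw [← integral_map hT.aemeasurable (hT.map_eq.symm ▸ M_int.aestronglyMeasurable), hT.map_eq]
  have positive_meas : NullMeasurableSet {x | 0 < M x} μ :=
    nullMeasurableSet_lt aemeasurable_const M_int.aemeasurable
  calc (0 : ℝ) = ∫ x, M x - M (T x) ∂μ := by rw [integral_sub M_int MT_int, integral_MT, sub_self]
    _ ≤ ∫ x, {x | 0 < M x}.indicator φ x ∂μ := by
        refine integral_mono (M_int.sub MT_int) (hφ.indicator₀ positive_meas) fun x => ?_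
        by_cases hx : 0 < M x
        · have := (le_max_iff.mp (partialSups_birkhoffSum_le (T := T) (φ := φ) n x)).resolve_left
            hx.not_ge
          rw [indicator_of_mem (show x ∈ {x | 0 < M x} from hx)]
          exact sub_le_iff_le_add.mpr this
        · rw [indicator_of_notMem (show x ∉ {x | 0 < M x} from hx)]
          exact sub_nonpos.mpr ((not_lt.mp hx).trans (partialSups_birkhoffSum_nonneg n (T x)))

theorem integral_nonneg_of_exists_birkhoffSum_pos (hT : MeasurePreserving T μ μ)
    (hφ : Integrable φ μ) (hpos : ∀ x, ∃ n, 0 < birkhoffSum T φ n x) : 0 ≤ ∫ x, φ x ∂μ := by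
  have positive_meas (n : ℕ) : NullMeasurableSet {x | 0 < partialSups (birkhoffSum T φ) n x} μ :=
    nullMeasurableSet_lt aemeasurable_const
      (integrable_partialSups_birkhoffSum hT hφ n).aemeasurable
  have integral_tendsto : Tendsto
      (fun n => ∫ x, {x | 0 < partialSups (birkhoffSum T φ) n x}.indicator φ x ∂μ) atTop
      (𝓝 (∫ x, φ x ∂μ)) := by
    refine tendsto_integral_of_dominated_convergence (fun x => ‖φ x‖)
      (fun n => (hφ.indicator₀ (positive_meas n)).aestronglyMeasurable) hφ.norm
      (fun n => ae_of_all _ fun x => norm_indicator_le_norm_self _ _)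
      (ae_of_all _ fun x => tendsto_const_nhds.congr' ?_)
    obtain ⟨m, hm⟩ := hpos x
    filter_upwards [eventually_ge_atTop m] with n hmn
    exact (indicator_of_mem (s := {x | 0 < partialSups (birkhoffSum T φ) n x})
      (hm.trans_le (le_partialSups_of_le (birkhoffSum T φ) hmn x)) φ).symm
  exact ge_of_tendsto' integral_tendsto (integral_indicator_partialSups_nonneg hT hφ)

theorem integral_le_of_exists_mul_lt_birkhoffSum (hT : MeasurePreserving T μ μ) {h : X → ℝ}
    (h_int : Integrable h μ) (hφ : Integrable φ μ) (hh : h ∘ T ≤ h)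
    (hlt : ∀ x, ∃ n : ℕ, n * h x < birkhoffSum T φ n x) : ∫ x, h x ∂μ ≤ ∫ x, φ x ∂μ := by
  rw [← sub_nonneg, ← integral_sub hφ h_int]
  refine integral_nonneg_of_exists_birkhoffSum_pos hT (hφ.sub h_int) fun x => ?_
  obtain ⟨n, hn⟩ := hlt x
  refine ⟨n, ?_⟩
  have := birkhoffSum_le_nsmul hh n x
  rw [nsmul_eq_mul] at this
  exact (birkhoffSum_sub T φ h n x).symm ▸ sub_pos.mpr (this.trans_lt hn)

theorem aemeasurable_upperBirkhoffAverage (hT : MeasurePreserving T μ μ) (hφ : Integrable φ μ) :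
    AEMeasurable (upperBirkhoffAverage T φ) μ := by
  have average_meas (n : ℕ) :
      AEMeasurable (fun x => ENNReal.ofReal (birkhoffAverage ℝ T φ n x)) μ :=
    ((integrable_birkhoffSum hT hφ n).aemeasurable.const_smul (n : ℝ)⁻¹).ennreal_ofReal
  have upperBirkhoffAverage_eq (x : X) : upperBirkhoffAverage T φ x =
      ⨅ n, ⨆ i, ENNReal.ofReal (birkhoffAverage ℝ T φ (i + n) x) := limsup_eq_iInf_iSup_of_nat'
  rw [funext upperBirkhoffAverage_eq]
  exact .iInf fun n => .iSup fun i => average_meas (i + n)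

theorem integral_toReal_min_upperBirkhoffAverage_le [IsFiniteMeasure μ]
    (hT : MeasurePreserving T μ μ) (hφ : Integrable φ μ) (hφ_nonneg : 0 ≤ φ) (M : NNReal) :
    ∫ x, (min (upperBirkhoffAverage T φ x) M).toReal ∂μ ≤ ∫ x, φ x ∂μ := by
  have lt_top (x : X) : min (upperBirkhoffAverage T φ x) M ≠ ⊤ :=
    ((min_le_right _ _).trans_lt ENNReal.coe_lt_top).ne
  have k_int : Integrable (fun x => (min (upperBirkhoffAverage T φ x) M).toReal) μ := by
    refine .of_bound ((aemeasurable_upperBirkhoffAverage hT hφ).min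
      aemeasurable_const).ennreal_toReal.aestronglyMeasurable M (ae_of_all _ fun x => ?_)
    rw [Real.norm_of_nonneg ENNReal.toReal_nonneg]
    exact ENNReal.toReal_mono ENNReal.coe_ne_top (min_le_right _ _)
  have shifted_le (ε : ℝ) (hε : 0 < ε) :
      ∫ x, (min (upperBirkhoffAverage T φ x) M).toReal - ε ∂μ ≤ ∫ x, φ x ∂μ := by
    refine integral_le_of_exists_mul_lt_birkhoffSum hT (k_int.sub (integrable_const ε)) hφ
      (fun x => ?_) fun x => ?_
    · exact sub_le_sub_right (ENNReal.toReal_mono (lt_top x)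
        (min_le_min_right _ (upperBirkhoffAverage_apply_le hφ_nonneg x))) ε
    · rcases lt_or_ge ((min (upperBirkhoffAverage T φ x) M).toReal - ε) 0 with h | h
      · exact ⟨1, by simpa using h.trans_le (hφ_nonneg x)⟩
      · refine exists_mul_lt_birkhoffSum_of_ofReal_lt
          (lt_of_lt_of_le ?_ (min_le_left _ (M : ENNReal)))
        exact (ENNReal.ofReal_lt_iff_lt_toReal h (lt_top x)).mpr (sub_lt_self _ hε)
  have shift_lim : Tendsto
      (fun ε : ℝ => ∫ x, (min (upperBirkhoffAverage T φ x) M).toReal - ε ∂μ) (𝓝[>] 0)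
      (𝓝 (∫ x, (min (upperBirkhoffAverage T φ x) M).toReal ∂μ)) := by
    simp only [integral_sub k_int (integrable_const _), integral_const, smul_eq_mul]
    refine Tendsto.mono_left ?_ nhdsWithin_le_nhds
    exact Continuous.tendsto' (by fun_prop) _ _ (by simp)
  exact le_of_tendsto shift_lim (eventually_mem_nhdsWithin.mono shifted_le)

theorem lintegral_upperBirkhoffAverage_le [IsFiniteMeasure μ] (hT : MeasurePreserving T μ μ)
    (hφ : Integrable φ μ) (hφ_nonneg : 0 ≤ φ) :
    ∫⁻ x, upperBirkhoffAverage T φ x ∂μ ≤ ENNReal.ofReal (∫ x, φ x ∂μ) := by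
  have L_meas := aemeasurable_upperBirkhoffAverage hT hφ
  have iSup_min (x : X) :
      ⨆ M : ℕ, min (upperBirkhoffAverage T φ x) (M : NNReal) = upperBirkhoffAverage T φ x := by
    rw [← inf_iSup_eq]
    simp [ENNReal.iSup_natCast]
  rw [lintegral_congr fun x => (iSup_min x).symm,
    lintegral_iSup' (fun M => L_meas.min aemeasurable_const)
      (ae_of_all _ fun x M N hMN => min_le_min_left _ (by exact_mod_cast hMN))]
  refine iSup_le fun M => ?_
  have min_lt_top : ∀ᵐ x ∂μ, min (upperBirkhoffAverage T φ x) (M : NNReal) < ⊤ :=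
    ae_of_all _ fun x => (min_le_right _ _).trans_lt ENNReal.coe_lt_top
  have lintegral_ne_top : ∫⁻ x, min (upperBirkhoffAverage T φ x) (M : NNReal) ∂μ ≠ ⊤ :=
    ((lintegral_mono fun x => min_le_right _ _).trans_lt
      (lintegral_const_lt_top ENNReal.coe_ne_top)).ne
  rw [ENNReal.le_ofReal_iff_toReal_le lintegral_ne_top (integral_nonneg hφ_nonneg),
    ← integral_toReal (L_meas.min aemeasurable_const) min_lt_top]
  exact integral_toReal_min_upperBirkhoffAverage_le hT hφ hφ_nonneg M

theorem ae_upperBirkhoffAverage_lt_top [IsFiniteMeasure μ] (hT : MeasurePreserving T μ μ)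
    (hφ : Integrable φ μ) (hφ_nonneg : 0 ≤ φ) : ∀ᵐ x ∂μ, upperBirkhoffAverage T φ x < ⊤ :=
  ae_lt_top' (aemeasurable_upperBirkhoffAverage hT hφ)
    ((lintegral_upperBirkhoffAverage_le hT hφ hφ_nonneg).trans_lt ENNReal.ofReal_lt_top).ne

theorem integrable_toReal_upperBirkhoffAverage [IsFiniteMeasure μ] (hT : MeasurePreserving T μ μ)
    (hφ : Integrable φ μ) (hφ_nonneg : 0 ≤ φ) :
    Integrable (fun x => (upperBirkhoffAverage T φ x).toReal) μ :=
  integrable_toReal_of_lintegral_ne_top (aemeasurable_upperBirkhoffAverage hT hφ)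
    ((lintegral_upperBirkhoffAverage_le hT hφ hφ_nonneg).trans_lt ENNReal.ofReal_lt_top).ne

theorem integral_toReal_upperBirkhoffAverage_le [IsFiniteMeasure μ]
    (hT : MeasurePreserving T μ μ) (hφ : Integrable φ μ) (hφ_nonneg : 0 ≤ φ) :
    ∫ x, (upperBirkhoffAverage T φ x).toReal ∂μ ≤ ∫ x, φ x ∂μ := by
  rw [integral_toReal (aemeasurable_upperBirkhoffAverage hT hφ)
    (ae_upperBirkhoffAverage_lt_top hT hφ hφ_nonneg)]
  exact ENNReal.toReal_le_of_le_ofReal (integral_nonneg hφ_nonneg)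
    (lintegral_upperBirkhoffAverage_le hT hφ hφ_nonneg)

end Integral

end MaximalErgodic

/-! ### Rotation numbers and Birkhoff averages of return turns -/

section RecurrentOrbits

variable {X : Type*} [TopologicalSpace X] {f : X ≃ₜ X}

theorem isOpenEmbedding_iterate (f : X ≃ₜ X) (k : ℕ) : IsOpenEmbedding f^[k] := by
  induction k with
  | zero => exact .id
  | succ k ih => exact ih.comp f.isOpenEmbedding

theorem tendsto_iterate_of_tendsto_iterate_iterate {ι : Type*} {F : Filter ι} {n : ι → ℕ} {k : ℕ}
    {y : X} (h : Tendsto (fun i => f^[n i] (f^[k] y)) F (𝓝 (f^[k] y))) :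
    Tendsto (fun i => f^[n i] y) F (𝓝 y) := by
  rw [(isOpenEmbedding_iterate f k).isInducing.tendsto_nhds_iff]
  exact h.congr fun i => (Function.Commute.iterate_iterate_self f (n i) k).eq y

end RecurrentOrbits

theorem ae_mem_recPlus {f : ℂ ≃ₜ ℂ} {ν : Measure ℂ} [IsFiniteMeasure ν]
    (hf : MeasurePreserving f ν ν) : ∀ᵐ z ∂ν, z ∈ RecPlus f := by
  filter_upwards [hf.conservative.ae_frequently_mem_of_mem_nhds] with z hz
  exact (mapClusterPt_iff_frequently.mpr hz).tendsto_subseq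

theorem hasRot_rho_or_rho_eq_zero {f : ℂ ≃ₜ ℂ} (I : HIsotopy f) (z' z : ℂ) :
    HasRot I z' z (rho I z' z) ∨ rho I z' z = 0 := by
  by_cases h : ∃ ρ, HasRot I z' z ρ
  · rw [rho, dif_pos h]
    exact .inl h.choose_spec
  · exact .inr (dif_neg h)

namespace FreeDisc

variable {f : ℂ ≃ₜ ℂ} {I : HIsotopy f} {U : Set ℂ} {z' : ℂ} {φ : ℂ → ℝ}

section ReturnBound

variable (hU : FreeDisc f U) (hz' : z' ∈ FixPts f) (hφ : 0 ≤ φ)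
  (hα : ∀ z ∈ U, |alphaU I U z' z| ≤ φ z)

include hU hφ hα in
theorem abs_birkhoffSum_enlace_le {l : ℂ → ℂ} (hl : IsLogOn U z' l) {z : ℂ} (hz : z ∈ U) {n : ℕ}
    (hn : f^[n] z ∈ U) :
    |birkhoffSum f (Enlace I · z') n z + (turns (l z) - turns (l (f^[n] z)))|
      ≤ birkhoffSum f φ n z := by
  induction n using Nat.strong_induction_on generalizing z with
  | h n ih =>
    rcases Nat.eq_zero_or_pos n with rfl | n_pos
    · simp
    have τ_pos := retTime_pos n_pos hn
    obtain ⟨m, rfl⟩ := Nat.exists_eq_add_of_le (retTime_le n_pos hn)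
    have hr := iterate_retTime_mem (f := f) hz
    have first_return := (hα z hz).trans (le_birkhoffSum (T := f) hφ τ_pos z)
    rw [hU.alphaU_eq hl hz] at first_return
    have iterate_eq : f^[retTime f U z + m] z = f^[m] (f^[retTime f U z] z) := by
      rw [add_comm, Function.iterate_add_apply]
    rw [iterate_eq] at hn ⊢
    have later_returns := ih m (by omega) hr hn
    rw [birkhoffSum_add, birkhoffSum_add]
    refine le_trans (le_of_eq ?_) ((abs_add_le _ _).trans (add_le_add first_return later_returns))
    congr 1
    ring

include hU hz' hφ hα in
/-- Moving the base point from `y ∈ U` to `f^[k] y` changes the turning of a nearly closed orbit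
segment only by a small amount. -/
theorem eventually_abs_birkhoffSum_enlace_le {y : ℂ} (hy : y ∈ U) (k : ℕ) {ι : Type*}
    {F : Filter ι} {n : ι → ℕ} (hn : Tendsto (fun i => f^[n i] y) F (𝓝 y)) :
    ∀ᶠ i in F, |birkhoffSum f (Enlace I · z') (n i) (f^[k] y)|
      ≤ birkhoffSum f φ (n i) (f^[k] y) + (birkhoffSum f φ k y + 1) := by
  obtain ⟨l, hl⟩ := hU.exists_isLogOn hz'
  set g : ℂ → ℝ := fun w => birkhoffSum f (Enlace I · z') k w + turns (l w) with g_def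
  have g_cont : ContinuousAt g y := (hU.continuousAt_birkhoffSum_enlace hz' hy k).add
    (continuous_turns.continuousAt.comp (hl.continuousOn.continuousAt (hU.1.mem_nhds hy)))
  have g_close : ∀ᶠ i in F, |g (f^[n i] y) - g y| < 1 :=
    (g_cont.tendsto.comp hn).eventually (ball_mem_nhds (g y) one_pos)
  filter_upwards [g_close, hn.eventually_mem (hU.1.mem_nhds hy)] with i hg hi
  have sum_le := hU.abs_birkhoffSum_enlace_le hφ hα hl hy hi
  have base_change : birkhoffSum f (Enlace I · z') (n i) (f^[k] y)
      = birkhoffSum f (Enlace I · z') (n i) y + (turns (l y) - turns (l (f^[n i] y)))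
        + (g (f^[n i] y) - g y) := by
    have := birkhoffSum_add f (Enlace I · z') k (n i) y
    rw [add_comm k, birkhoffSum_add] at this
    simp only [g_def]
    linarith
  have φ_le : birkhoffSum f φ (n i) y ≤ birkhoffSum f φ k y + birkhoffSum f φ (n i) (f^[k] y) := by
    rw [← birkhoffSum_add, add_comm k, birkhoffSum_add]
    exact le_add_of_nonneg_right (birkhoffSum_nonneg hφ _ _)
  rw [base_change]
  exact (abs_add_le _ _).trans (by linarith)

include hU hz' hφ hα in
theorem ofReal_abs_rho_le {z : ℂ} (hz : z ∈ RecPlus f) (hzU : z ∈ ⋃ k, f^[k] '' U) :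
    ENNReal.ofReal |rho I z' z| ≤ upperBirkhoffAverage f φ z := by
  rcases hasRot_rho_or_rho_eq_zero I z' z with hρ | hρ
  swap
  · simp [hρ]
  obtain ⟨n, n_mono, hn⟩ := hz
  obtain ⟨k, y, hy, rfl⟩ := mem_iUnion.mp hzU
  exact ofReal_abs_le_upperBirkhoffAverage n_mono.tendsto_atTop (hρ n n_mono hn)
    (hU.eventually_abs_birkhoffSum_enlace_le hz' hφ hα hy k
      (tendsto_iterate_of_tendsto_iterate_iterate hn))

end ReturnBound

theorem ae_abs_rho_le {S : Set ℂ} {ν : Measure ℂ} [IsFiniteMeasure ν]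
    (hU : FreeDisc f U) (hf : MeasurePreserving f ν ν) (hS : S ⊆ FixPts f)
    (hφ_int : Integrable φ ν) (hφ : 0 ≤ φ) (hα : ∀ z' ∈ S, ∀ z ∈ U, |alphaU I U z' z| ≤ φ z) :
    ∀ᵐ z ∂ν.restrict (⋃ k, f^[k] '' U), ∀ z' ∈ S,
      |rho I z' z| ≤ (upperBirkhoffAverage f φ z).toReal := by
  have saturation_open : IsOpen (⋃ k, f^[k] '' U) :=
    isOpen_iUnion fun k => (isOpenEmbedding_iterate f k).isOpenMap U hU.1
  rw [ae_restrict_iff' saturation_open.measurableSet]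
  filter_upwards [ae_mem_recPlus hf, ae_upperBirkhoffAverage_lt_top hf hφ_int hφ]
    with z hz z_lt_top hzU z' hz'
  exact (ENNReal.ofReal_le_iff_le_toReal z_lt_top.ne).mp
    (hU.ofReal_abs_rho_le (hS hz') hφ (hα z' hz') hz hzU)

end FreeDisc

theorem stmt16_integral_sup_rho_le_integral_alphaHat_general
    (f : ℂ ≃ₜ ℂ) (I : HIsotopy f) (hP1 : P1 I)
    (z' : ℕ → ℂ) (hz' : ∀ m, z' m ∈ FixPts ⇑f)
    (n₀ : ℕ) (R : ℝ) (hR : ∀ m, n₀ ≤ m → R ≤ ‖z' m‖)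
    (ν : Measure ℂ) [IsFiniteMeasure ν] (hinv : Measure.map (⇑f) ν = ν)
    (U : Set ℂ) (hU : FreeDisc f U) :
    ∫ zz in ⋃ k : ℕ, (⇑f)^[k] '' U,
        sSup {a : ℝ | ∃ m : ℕ, n₀ ≤ m ∧ a = |rho I (z' m) zz|} ∂ν
      ≤ ∫ zz in U, alphaHat I U R zz ∂ν := by
  have hf : MeasurePreserving f ν ν := ⟨f.continuous.measurable, hinv⟩
  obtain ⟨P, hP⟩ := hU.exists_forall_abs_alphaU_le_mul_retTime hP1
  set φ := U.indicator (alphaHat I U R)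
  have φ_nonneg : 0 ≤ φ := indicator_nonneg fun z _ => alphaHat_nonneg R z
  have φ_int : Integrable φ ν :=
    (integrable_indicator_iff hU.1.measurableSet).mpr (hU.integrableOn_alphaHat hP R hf)
  have alphaU_le : ∀ w ∈ {w ∈ FixPts f | R ≤ ‖w‖}, ∀ z ∈ U, |alphaU I U w z| ≤ φ z :=
    fun w hw z hz => (abs_alphaU_le_alphaHat hP hz hw.1 hw.2).trans (indicator_of_mem hz _).ge
  have L_int := integrable_toReal_upperBirkhoffAverage hf φ_int φ_nonneg
  have rho_le := hU.ae_abs_rho_le hf (sep_subset _ _) φ_int φ_nonneg alphaU_le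
  calc ∫ z in ⋃ k : ℕ, f^[k] '' U, sSup {a : ℝ | ∃ m : ℕ, n₀ ≤ m ∧ a = |rho I (z' m) z|} ∂ν
      ≤ ∫ z in ⋃ k : ℕ, f^[k] '' U, (upperBirkhoffAverage f φ z).toReal ∂ν :=
        integral_mono_of_nonneg
          (ae_of_all _ fun z => Real.sSup_nonneg fun a ⟨_, _, ha⟩ => ha ▸ abs_nonneg _)
          L_int.restrict <| rho_le.mono fun z hz => Real.sSup_le
            (fun a ⟨m, hm, ha⟩ => ha ▸ hz _ ⟨hz' m, hR m hm⟩) ENNReal.toReal_nonneg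
    _ ≤ ∫ z, (upperBirkhoffAverage f φ z).toReal ∂ν :=
        setIntegral_le_integral L_int (ae_of_all _ fun _ => ENNReal.toReal_nonneg)
    _ ≤ ∫ z, φ z ∂ν := integral_toReal_upperBirkhoffAverage_le hf φ_int φ_nonneg
    _ = ∫ z in U, alphaHat I U R z ∂ν := integral_indicator hU.1.measurableSet

theorem stmt16_integral_sup_rho_le_integral_alphaHat
    (f : ℂ ≃ₜ ℂ) (I : HIsotopy f) (hP1 : P1 I) (hP2 : P2 I)
    (hnc : ¬ IsCompact (FixPts ⇑f)) (hA : Adapted I)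
    (z' : ℕ → ℂ) (hz' : ∀ m, z' m ∈ FixPts ⇑f)
    (n₀ : ℕ) (R : ℝ) (hR : ∀ m, n₀ ≤ m → R ≤ ‖z' m‖)
    (ν : Measure ℂ) [IsFiniteMeasure ν] (hinv : Measure.map (⇑f) ν = ν)
    (U : Set ℂ) (hU : FreeDisc f U) :
    ∫ zz in ⋃ k : ℕ, (⇑f)^[k] '' U,
        sSup {a : ℝ | ∃ m : ℕ, n₀ ≤ m ∧ a = |rho I (z' m) zz|} ∂ν
      ≤ ∫ zz in U, alphaHat I U R zz ∂ν :=
  stmt16_integral_sup_rho_le_integral_alphaHat_general f I hP1 z' hz' n₀ R hR ν hinv U hU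

end
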